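/- Let G be a graph in the class 𝒞, let C be a minimal separator of G of size at least 2 that is an independent set, and let A and B be components of G∖C that are full to C. Then there exist two vertices x and y in C, a chordless path P_A from x to y with interior in A, and a chordless path P_B from x to y with interior in B, such that every vertex of C∖{x,y} has neighbors in the interior of both P_A and P_B; moreover V(P_A) ∪ V(P_B) induces a hole. -/

import Mathlib

open SimpleGraph

variable {V : Type} [Fintype V] [DecidableEq V]

/-- `p` is a chordless (induced) path in `G`: a path such that the only edges of `G`
between its vertices are the edges of the path. -/
def IsInducedPathW (G : SimpleGraph V) {a b : V} (p : G.Walk a b) : Prop :=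
  p.IsPath ∧ ∀ u v : V, u ∈ p.support → v ∈ p.support → G.Adj u v → p.toSubgraph.Adj u v

/-- A hole of length `n` in `G`: an induced (chordless) cycle of length `n ≥ 4`,
given by an injection of `ZMod n` into `G` whose adjacencies are exactly the consecutive ones. -/
def IsHoleEmb (G : SimpleGraph V) (n : ℕ) (f : ZMod n → V) : Prop :=
  4 ≤ n ∧ Function.Injective f ∧
    ∀ i j : ZMod n, G.Adj (f i) (f j) ↔ (j = i + 1 ∨ i = j + 1)

/-- `G` contains an even hole (induced even cycle of length at least 4). -/
def ContainsEvenHole (G : SimpleGraph V) : Prop :=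
  ∃ (n : ℕ) (f : ZMod n → V), IsHoleEmb G n f ∧ Even n

/-- `G` contains a square (hole of length 4). -/
def ContainsSquare (G : SimpleGraph V) : Prop :=
  ∃ f : ZMod 4 → V, IsHoleEmb G 4 f

/-- `G` contains a theta as an induced subgraph: three internally vertex-disjoint chordless
paths from `a` to `b`, each of length at least 2, with no edges between the paths other than
those incident to `a` or `b` specified by the paths. -/
def ContainsTheta (G : SimpleGraph V) : Prop :=
  ∃ (a b : V) (p₁ p₂ p₃ : G.Walk a b),
    (IsInducedPathW G p₁ ∧ IsInducedPathW G p₂ ∧ IsInducedPathW G p₃) ∧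
    (2 ≤ p₁.length ∧ 2 ≤ p₂.length ∧ 2 ≤ p₃.length) ∧
    (∀ w : V, ((w ∈ p₁.support ∧ w ∈ p₂.support) ∨ (w ∈ p₁.support ∧ w ∈ p₃.support) ∨
          (w ∈ p₂.support ∧ w ∈ p₃.support)) → (w = a ∨ w = b)) ∧
    (∀ u w : V, u ≠ a → u ≠ b → w ≠ a → w ≠ b →
      ((u ∈ p₁.support ∧ w ∈ p₂.support) ∨ (u ∈ p₁.support ∧ w ∈ p₃.support) ∨
       (u ∈ p₂.support ∧ w ∈ p₃.support)) → ¬G.Adj u w)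

/-- `G` contains a prism as an induced subgraph. -/
def ContainsPrism (G : SimpleGraph V) : Prop :=
  ∃ (a₁ b₁ a₂ b₂ a₃ b₃ : V) (p₁ : G.Walk a₁ b₁) (p₂ : G.Walk a₂ b₂) (p₃ : G.Walk a₃ b₃),
    (IsInducedPathW G p₁ ∧ IsInducedPathW G p₂ ∧ IsInducedPathW G p₃) ∧
    (1 ≤ p₁.length ∧ 1 ≤ p₂.length ∧ 1 ≤ p₃.length) ∧
    (G.Adj a₁ a₂ ∧ G.Adj a₂ a₃ ∧ G.Adj a₁ a₃) ∧
    (G.Adj b₁ b₂ ∧ G.Adj b₂ b₃ ∧ G.Adj b₁ b₃) ∧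
    (∀ w : V, ¬(w ∈ p₁.support ∧ w ∈ p₂.support) ∧ ¬(w ∈ p₁.support ∧ w ∈ p₃.support) ∧
          ¬(w ∈ p₂.support ∧ w ∈ p₃.support)) ∧
    (∀ u w : V, u ∈ p₁.support → w ∈ p₂.support → G.Adj u w →
      (u = a₁ ∧ w = a₂) ∨ (u = b₁ ∧ w = b₂)) ∧
    (∀ u w : V, u ∈ p₁.support → w ∈ p₃.support → G.Adj u w →
      (u = a₁ ∧ w = a₃) ∨ (u = b₁ ∧ w = b₃)) ∧
    (∀ u w : V, u ∈ p₂.support → w ∈ p₃.support → G.Adj u w →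
      (u = a₂ ∧ w = a₃) ∨ (u = b₂ ∧ w = b₃))

/-- `G` contains a pyramid as an induced subgraph. -/
def ContainsPyramid (G : SimpleGraph V) : Prop :=
  ∃ (a b₁ b₂ b₃ : V) (p₁ : G.Walk a b₁) (p₂ : G.Walk a b₂) (p₃ : G.Walk a b₃),
    (IsInducedPathW G p₁ ∧ IsInducedPathW G p₂ ∧ IsInducedPathW G p₃) ∧
    (1 ≤ p₁.length ∧ 1 ≤ p₂.length ∧ 1 ≤ p₃.length) ∧
    ((2 ≤ p₁.length ∧ 2 ≤ p₂.length) ∨ (2 ≤ p₁.length ∧ 2 ≤ p₃.length) ∨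
     (2 ≤ p₂.length ∧ 2 ≤ p₃.length)) ∧
    (G.Adj b₁ b₂ ∧ G.Adj b₂ b₃ ∧ G.Adj b₁ b₃) ∧
    (∀ w : V, ((w ∈ p₁.support ∧ w ∈ p₂.support) ∨ (w ∈ p₁.support ∧ w ∈ p₃.support) ∨
          (w ∈ p₂.support ∧ w ∈ p₃.support)) → w = a) ∧
    (∀ u w : V, u ∈ p₁.support → w ∈ p₂.support → u ≠ a → w ≠ a → G.Adj u w →
      u = b₁ ∧ w = b₂) ∧
    (∀ u w : V, u ∈ p₁.support → w ∈ p₃.support → u ≠ a → w ≠ a → G.Adj u w →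
      u = b₁ ∧ w = b₃) ∧
    (∀ u w : V, u ∈ p₂.support → w ∈ p₃.support → u ≠ a → w ≠ a → G.Adj u w →
      u = b₂ ∧ w = b₃)

/-- `G` contains the cube as an induced subgraph: a hole of length 6 together with
two non-adjacent vertices `u, v` outside it, `u` adjacent to the even positions and
`v` adjacent to the odd positions. -/
def ContainsCube (G : SimpleGraph V) : Prop :=
  ∃ (f : ZMod 6 → V) (u v : V), IsHoleEmb G 6 f ∧
    u ∉ Set.range f ∧ v ∉ Set.range f ∧ ¬G.Adj u v ∧
    (∀ m : ZMod 6, G.Adj u (f m) ↔ (m = 0 ∨ m = 2 ∨ m = 4)) ∧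
    (∀ m : ZMod 6, G.Adj v (f m) ↔ (m = 1 ∨ m = 3 ∨ m = 5))

/-- `G` contains an even wheel: a hole plus a vertex outside it having at least 3 and
an even number of neighbors on the hole. -/
def ContainsEvenWheel (G : SimpleGraph V) : Prop :=
  ∃ (n : ℕ) (f : ZMod n → V) (u : V), IsHoleEmb G n f ∧ u ∉ Set.range f ∧
    3 ≤ {m : ZMod n | G.Adj u (f m)}.ncard ∧ Even {m : ZMod n | G.Adj u (f m)}.ncard

/-- `G` contains a butterfly: a wheel `(H,v)` with `N_H(v) = {a,b,c,d}`,
`ab, cd ∈ E(G)` and `bc, da ∉ E(G)`. -/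
def ContainsButterfly (G : SimpleGraph V) : Prop :=
  ∃ (n : ℕ) (f : ZMod n → V) (u : V), IsHoleEmb G n f ∧ u ∉ Set.range f ∧
    ∃ i j : ZMod n, i ≠ j ∧ i ≠ j + 1 ∧ i + 1 ≠ j ∧ i + 1 ≠ j + 1 ∧
      ¬G.Adj (f (i + 1)) (f j) ∧ ¬G.Adj (f (j + 1)) (f i) ∧
      (∀ m : ZMod n, G.Adj u (f m) ↔ (m = i ∨ m = i + 1 ∨ m = j ∨ m = j + 1))

/-- A 2-wheel in `G`: a hole `f` together with two distinct centers `u, v` outside the hole,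
each having at least three neighbors on the hole. -/
def Is2WheelCfg (G : SimpleGraph V) (n : ℕ) (f : ZMod n → V) (u v : V) : Prop :=
  IsHoleEmb G n f ∧ u ≠ v ∧ u ∉ Set.range f ∧ v ∉ Set.range f ∧
  3 ≤ {m : ZMod n | G.Adj u (f m)}.ncard ∧ 3 ≤ {m : ZMod n | G.Adj v (f m)}.ncard

/-- The 2-wheel `(f, {u,v})` is nested: the hole splits at `f i` and `f (i+d)` into two arcs,
with all neighbors of `u` on one arc and all neighbors of `v` on the other. -/
def NestedCfg (G : SimpleGraph V) (n : ℕ) (f : ZMod n → V) (u v : V) : Prop :=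
  ∃ (i : ZMod n) (d : ℕ), 1 ≤ d ∧ d < n ∧
    (∀ m : ZMod n, G.Adj u (f m) → ∃ e : ℕ, e ≤ d ∧ m = i + (e : ZMod n)) ∧
    (∀ m : ZMod n, G.Adj v (f m) → ∃ e : ℕ, e ≤ n - d ∧ m = i + (d : ZMod n) + (e : ZMod n))

/-- The 2-wheel `(f, {u,v})` is the cube. -/
def CubeCfg (G : SimpleGraph V) (n : ℕ) (f : ZMod n → V) (u v : V) : Prop :=
  n = 6 ∧ ∃ i : ZMod n,
    (∀ m : ZMod n, G.Adj u (f m) ↔ (m = i ∨ m = i + 2 ∨ m = i + 4)) ∧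
    (∀ m : ZMod n, G.Adj v (f m) ↔ (m = i + 1 ∨ m = i + 3 ∨ m = i + 5))

/-- The 2-wheel `(f, {u,v})` is a cousin wheel: `N_H(u) = {h₁,h₂,h₃}` and
`N_H(v) = {h₂,h₃,h₄}` for four consecutive vertices of the hole (or with `u, v` swapped). -/
def CousinCfg (G : SimpleGraph V) (n : ℕ) (f : ZMod n → V) (u v : V) : Prop :=
  (∃ i : ZMod n,
    (∀ m : ZMod n, G.Adj u (f m) ↔ (m = i ∨ m = i + 1 ∨ m = i + 2)) ∧
    (∀ m : ZMod n, G.Adj v (f m) ↔ (m = i + 1 ∨ m = i + 2 ∨ m = i + 3))) ∨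
  (∃ i : ZMod n,
    (∀ m : ZMod n, G.Adj v (f m) ↔ (m = i ∨ m = i + 1 ∨ m = i + 2)) ∧
    (∀ m : ZMod n, G.Adj u (f m) ↔ (m = i + 1 ∨ m = i + 2 ∨ m = i + 3)))

/-- A `u`-sector of the hole `f`: a subpath from `f i` to `f (i+d)` (`1 ≤ d < n`)
whose two ends are adjacent to `u` and whose internal vertices are not. -/
def IsSector (G : SimpleGraph V) (n : ℕ) (f : ZMod n → V) (u : V) (i : ZMod n) (d : ℕ) : Prop :=
  1 ≤ d ∧ d < n ∧ G.Adj u (f i) ∧ G.Adj u (f (i + (d : ZMod n))) ∧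
    ∀ m : ℕ, 0 < m → m < d → ¬G.Adj u (f (i + (m : ZMod n)))

/-- The class 𝒞: (theta, prism, pyramid, butterfly)-free graphs in which every 2-wheel
with non-adjacent centers is a nested wheel or a cousin wheel. -/
def InClassC (G : SimpleGraph V) : Prop :=
  ¬ContainsTheta G ∧ ¬ContainsPrism G ∧ ¬ContainsPyramid G ∧ ¬ContainsButterfly G ∧
  ∀ (n : ℕ) (f : ZMod n → V) (u v : V), Is2WheelCfg G n f u v → ¬G.Adj u v →
    (NestedCfg G n f u v ∨ CousinCfg G n f u v)

/-- `G` contains `S_{k,k,k}` as an induced subgraph: a root `r` and three legs of `k` edges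
each, with no other adjacencies among these vertices. -/
def ContainsSpider (G : SimpleGraph V) (k : ℕ) : Prop :=
  ∃ (r : V) (f : Fin 3 → Fin k → V),
    (∀ (j : Fin 3) (m : Fin k), f j m ≠ r) ∧
    (∀ (j₁ : Fin 3) (m₁ : Fin k) (j₂ : Fin 3) (m₂ : Fin k),
      f j₁ m₁ = f j₂ m₂ → j₁ = j₂ ∧ m₁ = m₂) ∧
    (∀ (j : Fin 3) (m : Fin k), G.Adj r (f j m) ↔ (m : ℕ) = 0) ∧
    (∀ (j₁ : Fin 3) (m₁ : Fin k) (j₂ : Fin 3) (m₂ : Fin k),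
      G.Adj (f j₁ m₁) (f j₂ m₂) ↔
        (j₁ = j₂ ∧ ((m₁ : ℕ) + 1 = (m₂ : ℕ) ∨ (m₂ : ℕ) + 1 = (m₁ : ℕ))))

/-- A `k`-span-wheel in `G`: a hole `f` of length `n`, with `x = f 0` and `y = f p`
non-adjacent, the two paths `P_A = f 0, f 1, …, f p` and `P_B = f 0, f (n-1), …, f p`,
and centers `c 0, …, c (k-1)` outside the hole such that `{c i} ∪ {x,y}` is independent,
every center has at least three neighbors on the hole and neighbors in the interiors of
both `P_A` and `P_B`, and the neighbors of the centers appear along both `P_A` and `P_B`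
(from `x` to `y`) in the order of the centers. -/
def IsSpanWheel (G : SimpleGraph V) (k n p : ℕ) (f : ZMod n → V) (c : Fin k → V) : Prop :=
  IsHoleEmb G n f ∧
  2 ≤ p ∧ p ≤ n - 2 ∧
  ¬G.Adj (f 0) (f (p : ZMod n)) ∧
  Function.Injective c ∧
  (∀ i : Fin k, c i ∉ Set.range f) ∧
  (∀ i j : Fin k, i ≠ j → ¬G.Adj (c i) (c j)) ∧
  (∀ i : Fin k, ¬G.Adj (c i) (f 0)) ∧
  (∀ i : Fin k, ¬G.Adj (c i) (f (p : ZMod n))) ∧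
  (∀ i : Fin k, 3 ≤ {m : ZMod n | G.Adj (c i) (f m)}.ncard) ∧
  (∀ i : Fin k, ∃ a : ℕ, 0 < a ∧ a < p ∧ G.Adj (c i) (f (a : ZMod n))) ∧
  (∀ i : Fin k, ∃ b : ℕ, p < b ∧ b < n ∧ G.Adj (c i) (f (b : ZMod n))) ∧
  (∀ i j : Fin k, i < j → ∀ a₁ a₂ : ℕ, a₁ ≤ p → a₂ ≤ p →
    G.Adj (c i) (f (a₁ : ZMod n)) → G.Adj (c j) (f (a₂ : ZMod n)) → a₁ ≤ a₂) ∧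
  (∀ i j : Fin k, i < j → ∀ b₁ b₂ : ℕ, p ≤ b₁ → b₁ ≤ n → p ≤ b₂ → b₂ ≤ n →
    G.Adj (c i) (f (b₁ : ZMod n)) → G.Adj (c j) (f (b₂ : ZMod n)) → b₂ ≤ b₁)

/-- `X` separates `s` from `t` in `G`: neither is in `X` and every walk from `s` to `t`
meets `X`. -/
def Separates (G : SimpleGraph V) (X : Set V) (s t : V) : Prop :=
  s ∉ X ∧ t ∉ X ∧ ∀ p : G.Walk s t, ∃ w ∈ p.support, w ∈ X

/-- `X` is a minimal separator of `G`: for some pair `s, t` it is an inclusion-wise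
minimal `st`-separator. -/
def MinSeparator (G : SimpleGraph V) (X : Set V) : Prop :=
  ∃ s t : V, Separates G X s t ∧ ∀ Y ⊆ X, Separates G Y s t → Y = X

/-- `A` is a connected component of `G ∖ C` that is full to `C`. -/
def IsFullComponent (G : SimpleGraph V) (C A : Set V) : Prop :=
  A.Nonempty ∧ Disjoint A C ∧ (G.induce A).Connected ∧
  (∀ a ∈ A, ∀ w : V, G.Adj a w → w ∈ A ∪ C) ∧
  (∀ x ∈ C, ∃ a ∈ A, G.Adj x a)

/-- A tree decomposition of `G` with tree `T` and bags `B`. -/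
def IsTreeDecomp (G : SimpleGraph V) {ι : Type} (T : SimpleGraph ι) (B : ι → Finset V) : Prop :=
  T.IsTree ∧
  (∀ v : V, ∃ i, v ∈ B i) ∧
  (∀ u v : V, G.Adj u v → ∃ i, u ∈ B i ∧ v ∈ B i) ∧
  (∀ (v : V) (i j : ι), v ∈ B i → v ∈ B j →
    ∀ (p : T.Walk i j), p.IsPath → ∀ x ∈ p.support, v ∈ B x)

/-- The treewidth of a finite graph: the least `w` such that `G` has a tree decomposition
all of whose bags have size at most `w + 1`. -/
noncomputable def treewidth (G : SimpleGraph V) : ℕ :=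
  sInf {w : ℕ | ∃ (m : ℕ) (T : SimpleGraph (Fin m)) (B : Fin m → Finset V),
    IsTreeDecomp G T B ∧ ∀ i, (B i).card ≤ w + 1}

/-- A graph is chordal iff it has no hole. -/
def IsChordal (G : SimpleGraph V) : Prop :=
  ¬∃ (n : ℕ) (f : ZMod n → V), IsHoleEmb G n f

/-- `H` is obtained from `G` by a minimal fill-in (minimal chordal completion). -/
def IsMinimalChordalCompletion (G H : SimpleGraph V) : Prop :=
  G ≤ H ∧ IsChordal H ∧ ∀ H' : SimpleGraph V, G ≤ H' → H' ≤ H → IsChordal H' → H' = H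

/-- `Ω` is a potential maximal clique of `G`: a maximal clique of some minimal chordal
completion of `G`. -/
def IsPMC (G : SimpleGraph V) (Ω : Set V) : Prop :=
  ∃ H : SimpleGraph V, IsMinimalChordalCompletion G H ∧ H.IsClique Ω ∧
    ∀ Ω' : Set V, H.IsClique Ω' → Ω ⊆ Ω' → Ω' = Ω

/-- `n` satisfies the Ramsey property for `(t, k)`: every graph on `n` vertices has a
clique of size `t` or an independent set of size `k`. -/
def RamseyProp (n t k : ℕ) : Prop :=
  ∀ G : SimpleGraph (Fin n),
    (∃ S : Finset (Fin n), G.IsNClique t S) ∨ (∃ S : Finset (Fin n), Gᶜ.IsNClique k S)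

/-- The Ramsey number `R(t, k)`. -/
noncomputable def ramseyNumber (t k : ℕ) : ℕ := sInf {n : ℕ | RamseyProp n t k}

set_option linter.unusedSectionVars false

/-- A set of vertices is connected: any two of its vertices are joined by a walk inside it. -/
def Conn (G : SimpleGraph V) (S : Set V) : Prop :=
  ∀ u ∈ S, ∀ v ∈ S, ∃ p : G.Walk u v, ∀ w ∈ p.support, w ∈ S

/-- Induced path of length `n` in function form. -/
def IP (G : SimpleGraph V) (n : ℕ) (p : ℕ → V) : Prop :=
  (∀ i ≤ n, ∀ j ≤ n, p i = p j → i = j) ∧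
  ∀ i ≤ n, ∀ j ≤ n, (G.Adj (p i) (p j) ↔ (i + 1 = j ∨ j + 1 = i))

lemma conn_singleton (G : SimpleGraph V) (v : V) : Conn G {v} := by
  intro u hu w hw
  rw [Set.mem_singleton_iff] at hu hw
  subst hu; subst hw
  exact ⟨Walk.nil, by simp⟩

lemma conn_of_center {G : SimpleGraph V} {S : Set V} (c : V)
    (h : ∀ u ∈ S, ∃ p : G.Walk c u, ∀ w ∈ p.support, w ∈ S) : Conn G S := by
  intro u hu v hv
  obtain ⟨p, hp⟩ := h u hu
  obtain ⟨q, hq⟩ := h v hv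
  refine ⟨p.reverse.append q, ?_⟩
  intro w hw
  rw [Walk.mem_support_append_iff] at hw
  rcases hw with hw | hw
  · exact hp w (by simpa using hw)
  · exact hq w hw

lemma conn_union {G : SimpleGraph V} {S T : Set V} (hS : Conn G S) (hT : Conn G T)
    {c : V} (h1 : c ∈ S) (h2 : c ∈ T) : Conn G (S ∪ T) := by
  apply conn_of_center c
  rintro u (hu | hu)
  · obtain ⟨p, hp⟩ := hS c h1 u hu
    exact ⟨p, fun w hw => Or.inl (hp w hw)⟩
  · obtain ⟨p, hp⟩ := hT c h2 u hu
    exact ⟨p, fun w hw => Or.inr (hp w hw)⟩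

lemma conn_insert {G : SimpleGraph V} {S : Set V} (hS : Conn G S) {v s : V} (hs : s ∈ S)
    (h : G.Adj v s) : Conn G (insert v S) := by
  apply conn_of_center s
  rintro u (hu | hu)
  · subst hu
    exact ⟨Walk.cons h.symm Walk.nil, by simp [hs]⟩
  · obtain ⟨p, hp⟩ := hS s hs u hu
    exact ⟨p, fun w hw => Or.inr (hp w hw)⟩

lemma conn_union_adj {G : SimpleGraph V} {S T : Set V} (hS : Conn G S) (hT : Conn G T)
    {s t : V} (h1 : s ∈ S) (h2 : t ∈ T) (h : G.Adj s t) : Conn G (S ∪ T) := by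
  have h3 := conn_insert hS h1 h.symm
  have h4 := conn_union h3 hT (Set.mem_insert _ _) h2
  have : insert t S ∪ T = S ∪ T := by
    ext x; simp only [Set.mem_union, Set.mem_insert_iff]
    constructor
    · rintro ((rfl | h) | h) <;> tauto
    · tauto
  rwa [this] at h4

lemma conn_seg {G : SimpleGraph V} {n : ℕ} {p : ℕ → V} (hp : IP G n p) {i j : ℕ} (hj : j ≤ n) :
    Conn G {w | ∃ k, i ≤ k ∧ k ≤ j ∧ w = p k} := by
  induction j with
  | zero =>
    rintro u ⟨k, h1, h2, rfl⟩ v ⟨l, h3, h4, rfl⟩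
    obtain rfl : k = 0 := by omega
    obtain rfl : l = 0 := by omega
    exact ⟨Walk.nil, by simp; omega⟩
  | succ j ih =>
    by_cases hij : i ≤ j
    · have h := conn_insert (ih (by omega)) (v := p (j + 1)) (s := p j) ⟨j, hij, le_rfl, rfl⟩
        ((hp.2 (j+1) hj j (by omega)).2 (Or.inr rfl))
      convert h using 1
      ext x
      simp only [Set.mem_ofPred_eq, Set.mem_insert_iff]
      constructor
      · rintro ⟨k, h1, h2, rfl⟩
        by_cases hk : k = j + 1
        · left; rw [hk]
        · right; exact ⟨k, h1, by omega, rfl⟩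
      · rintro (rfl | ⟨k, h1, h2, rfl⟩)
        · exact ⟨j+1, by omega, le_rfl, rfl⟩
        · exact ⟨k, h1, by omega, rfl⟩
    · rintro u ⟨k, h1, h2, rfl⟩ v ⟨l, h3, h4, rfl⟩
      obtain rfl : k = j + 1 := by omega
      obtain rfl : l = j + 1 := by omega
      exact ⟨Walk.nil, fun w hw => by simp at hw; subst hw; exact ⟨j+1, h1, le_rfl, rfl⟩⟩

/-- Existence of shortest (hence induced) paths. -/
lemma exists_ip {G : SimpleGraph V} {S : Set V} (hS : Conn G S) {u v : V} (hu : u ∈ S)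
    (hv : v ∈ S) : ∃ n p, IP G n p ∧ p 0 = u ∧ p n = v ∧ (∀ i ≤ n, p i ∈ S) ∧
      ∀ q : G.Walk u v, (∀ w ∈ q.support, w ∈ S) → n ≤ q.length := by
  classical
  let P : ℕ → Prop := fun n => ∃ p : G.Walk u v, (∀ w ∈ p.support, w ∈ S) ∧ p.length = n
  have hex : ∃ n, P n := by
    obtain ⟨p, hp⟩ := hS u hu v hv
    exact ⟨_, p, hp, rfl⟩
  obtain ⟨p, hp, hl⟩ := Nat.find_spec hex
  have hmin : ∀ q : G.Walk u v, (∀ w ∈ q.support, w ∈ S) → p.length ≤ q.length := by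
    intro q hq
    rw [hl]
    exact Nat.find_min' hex ⟨q, hq, rfl⟩
  have hmem : ∀ i, p.getVert i ∈ S := fun i => hp _ (Walk.getVert_mem_support p i)
  have tk : ∀ i, ∀ w ∈ (p.take i).support, w ∈ S := by
    intro i w hw
    rw [Walk.mem_support_iff_exists_getVert] at hw
    obtain ⟨k, rfl, hk⟩ := hw
    rw [Walk.take_getVert]; exact hmem _
  have dr : ∀ i, ∀ w ∈ (p.drop i).support, w ∈ S := by
    intro i w hw
    rw [Walk.mem_support_iff_exists_getVert] at hw
    obtain ⟨k, rfl, hk⟩ := hw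
    rw [Walk.drop_getVert]; exact hmem _
  have inj : ∀ i ≤ p.length, ∀ j ≤ p.length, i < j → p.getVert i ≠ p.getVert j := by
    intro i hi j hj hij h
    have h1 := hmin ((p.take i).append ((p.drop j).copy h.symm rfl)) (by
      intro w hw
      rw [Walk.mem_support_append_iff] at hw
      rcases hw with hw | hw
      · exact tk i w hw
      · exact dr j w (by simpa using hw))
    simp only [Walk.length_append, Walk.take_length, Walk.length_copy, Walk.drop_length] at h1
    have : i ⊓ p.length = i := by simpa using hi
    omega
  have adj : ∀ i ≤ p.length, ∀ j ≤ p.length, i + 1 < j →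
      ¬ G.Adj (p.getVert i) (p.getVert j) := by
    intro i hi j hj hij h
    have h1 := hmin ((p.take i).append (Walk.cons h (p.drop j))) (by
      intro w hw
      rw [Walk.mem_support_append_iff] at hw
      rcases hw with hw | hw
      · exact tk i w hw
      · rw [Walk.support_cons, List.mem_cons] at hw
        rcases hw with rfl | hw
        · exact hmem _
        · exact dr j w hw)
    simp only [Walk.length_append, Walk.take_length, Walk.length_cons, Walk.drop_length] at h1
    have : i ⊓ p.length = i := by simpa using hi
    omega
  refine ⟨p.length, p.getVert, ⟨?_, ?_⟩, by simp, by simp, fun i _ => hmem i, hmin⟩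
  · intro i hi j hj h
    rcases lt_trichotomy i j with h1 | h1 | h1
    · exact absurd h (inj i hi j hj h1)
    · exact h1
    · exact absurd h.symm (inj j hj i hi h1)
  · intro i hi j hj
    constructor
    · intro h
      by_contra hne
      rcases lt_trichotomy i j with h1 | h1 | h1
      · exact adj i hi j hj (by omega) h
      · subst h1; exact G.loopless.irrefl _ h
      · exact adj j hj i hi (by omega) h.symm
    · rintro (rfl | rfl)
      · exact Walk.adj_getVert_succ p (by omega)
      · exact (Walk.adj_getVert_succ p (by omega)).symm

lemma walk_of_ip {G : SimpleGraph V} {n : ℕ} {p : ℕ → V}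
    (h : ∀ i < n, G.Adj (p i) (p (i+1))) :
    ∃ w : G.Walk (p 0) (p n), w.length = n ∧ ∀ i ≤ n, w.getVert i = p i := by
  induction n with
  | zero => exact ⟨Walk.nil, by simp, by simp⟩
  | succ n ih =>
    obtain ⟨w, hw1, hw2⟩ := ih (fun i hi => h i (by omega))
    refine ⟨w.append (Walk.cons (h n (by omega)) Walk.nil), by simp [hw1], ?_⟩
    intro i hi
    rw [Walk.getVert_append, hw1]
    split_ifs with h1
    · exact hw2 i (by omega)
    · have h2 : i = n ∨ i = n + 1 := by omega
      rcases h2 with rfl | rfl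
      · simp
      · simp

lemma induced_of_ip {G : SimpleGraph V} {n : ℕ} {p : ℕ → V} (hp : IP G n p) {u v : V}
    (hu : p 0 = u) (hv : p n = v) :
    ∃ w : G.Walk u v, IsInducedPathW G w ∧ w.length = n ∧
      ∀ x, x ∈ w.support ↔ ∃ i ≤ n, x = p i := by
  subst hu; subst hv
  obtain ⟨w, hl, hg⟩ := walk_of_ip (G := G) (n := n) (p := p)
    (fun i hi => (hp.2 i (by omega) (i+1) (by omega)).2 (Or.inl rfl))
  have hs : ∀ x, x ∈ w.support ↔ ∃ i ≤ n, x = p i := by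
    intro x
    rw [Walk.mem_support_iff_exists_getVert]
    constructor
    · rintro ⟨k, rfl, hk⟩
      exact ⟨k, by omega, hg k (by omega)⟩
    · rintro ⟨k, hk, rfl⟩
      exact ⟨k, hg k hk, by omega⟩
  refine ⟨w, ⟨?_, ?_⟩, hl, hs⟩
  · rw [← Walk.IsPath.getVert_injOn_iff]
    intro i hi j hj hij
    simp only [Set.mem_ofPred_eq] at hi hj
    rw [hg i (by omega), hg j (by omega)] at hij
    exact hp.1 i (by omega) j (by omega) hij
  · intro a b ha hb hab
    obtain ⟨i, hi, rfl⟩ := (hs a).1 ha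
    obtain ⟨j, hj, rfl⟩ := (hs b).1 hb
    rcases (hp.2 i hi j hj).1 hab with rfl | rfl
    · have := w.toSubgraph_adj_getVert (i := i) (by omega)
      rwa [hg i (by omega), hg (i+1) hj] at this
    · have := w.toSubgraph_adj_getVert (i := j) (by omega)
      rw [hg j (by omega), hg (j+1) hi] at this
      exact this.symm

lemma exists_induced {G : SimpleGraph V} {S : Set V} (hS : Conn G S) {u v : V} (hu : u ∈ S)
    (hv : v ∈ S) : ∃ w : G.Walk u v, IsInducedPathW G w ∧ (∀ x ∈ w.support, x ∈ S) ∧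
      (u ≠ v → 1 ≤ w.length) ∧ (u ≠ v → ¬ G.Adj u v → 2 ≤ w.length) := by
  obtain ⟨n, p, hp, h0, hn, hpS, -⟩ := exists_ip hS hu hv
  obtain ⟨w, hw, hl, hs⟩ := induced_of_ip hp h0 hn
  refine ⟨w, hw, ?_, ?_, ?_⟩
  · intro x hx
    obtain ⟨i, hi, rfl⟩ := (hs x).1 hx
    exact hpS i hi
  · intro hne
    by_contra h
    obtain rfl : n = 0 := by omega
    exact hne (h0.symm.trans hn)
  · intro hne hadj
    by_contra h
    have : n = 0 ∨ n = 1 := by omega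
    rcases this with rfl | rfl
    · exact hne (h0.symm.trans hn)
    · apply hadj
      rw [← h0, ← hn]
      exact (hp.2 0 (by omega) 1 (by omega)).2 (Or.inl rfl)

/-- A theta from three connected sets. -/
lemma theta_of_sets {G : SimpleGraph V} {u v : V} (M : Fin 3 → Set V)
    (hc : ∀ i, Conn G (M i)) (hu : ∀ i, u ∈ M i) (hv : ∀ i, v ∈ M i)
    (hne : u ≠ v) (hna : ¬ G.Adj u v)
    (hd : ∀ i j, i ≠ j → ∀ w ∈ M i, ∀ z ∈ M j, w ≠ u → w ≠ v → z ≠ u → z ≠ v →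
      w ≠ z ∧ ¬ G.Adj w z) : ContainsTheta G := by
  choose p hp hs _ hl using fun i => exists_induced (hc i) (hu i) (hv i)
  have hd' : ∀ i j, i ≠ j → ∀ w, w ∈ (p i).support → w ∈ (p j).support → w = u ∨ w = v := by
    intro i j hij w h1 h2
    by_contra h
    push Not at h
    exact (hd i j hij w (hs i w h1) w (hs j w h2) h.1 h.2 h.1 h.2).1 rfl
  have he' : ∀ i j, i ≠ j → ∀ w z, w ∈ (p i).support → z ∈ (p j).support →
      w ≠ u → w ≠ v → z ≠ u → z ≠ v → ¬ G.Adj w z := by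
    intro i j hij w z h1 h2 a b c d
    exact (hd i j hij w (hs i w h1) z (hs j z h2) a b c d).2
  refine ⟨u, v, p 0, p 1, p 2, ⟨hp 0, hp 1, hp 2⟩,
    ⟨hl 0 hne hna, hl 1 hne hna, hl 2 hne hna⟩, ?_, ?_⟩
  · rintro w (⟨h1, h2⟩ | ⟨h1, h2⟩ | ⟨h1, h2⟩)
    · exact hd' 0 1 (by decide) w h1 h2
    · exact hd' 0 2 (by decide) w h1 h2
    · exact hd' 1 2 (by decide) w h1 h2
  · rintro w z a b c d (⟨h1, h2⟩ | ⟨h1, h2⟩ | ⟨h1, h2⟩)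
    · exact he' 0 1 (by decide) w z h1 h2 a b c d
    · exact he' 0 2 (by decide) w z h1 h2 a b c d
    · exact he' 1 2 (by decide) w z h1 h2 a b c d

/-- A pyramid from three connected sets. -/
lemma pyramid_of_sets {G : SimpleGraph V} {u : V} (t : Fin 3 → V) (M : Fin 3 → Set V)
    (hc : ∀ i, Conn G (M i)) (hu : ∀ i, u ∈ M i) (ht : ∀ i, t i ∈ M i)
    (hne : ∀ i, u ≠ t i) (hadj : ∀ i j, i ≠ j → G.Adj (t i) (t j))
    (k : Fin 3) (hna : ∀ i, i ≠ k → ¬ G.Adj u (t i))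
    (hd : ∀ i j, i ≠ j → ∀ w ∈ M i, ∀ z ∈ M j, w ≠ u → z ≠ u →
      w ≠ z ∧ (G.Adj w z → w = t i ∧ z = t j)) : ContainsPyramid G := by
  choose p hp hs hl1 hl using fun i => exists_induced (hc i) (hu i) (ht i)
  have hd' : ∀ i j, i ≠ j → ∀ w, w ∈ (p i).support → w ∈ (p j).support → w = u := by
    intro i j hij w h1 h2
    by_contra h
    exact (hd i j hij w (hs i w h1) w (hs j w h2) h h).1 rfl
  have he' : ∀ i j, i ≠ j → ∀ w z, w ∈ (p i).support → z ∈ (p j).support →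
      w ≠ u → z ≠ u → G.Adj w z → w = t i ∧ z = t j := by
    intro i j hij w z h1 h2 a b
    exact (hd i j hij w (hs i w h1) z (hs j z h2) a b).2
  refine ⟨u, t 0, t 1, t 2, p 0, p 1, p 2, ⟨hp 0, hp 1, hp 2⟩,
    ⟨hl1 0 (hne 0), hl1 1 (hne 1), hl1 2 (hne 2)⟩, ?_,
    ⟨hadj 0 1 (by decide), hadj 1 2 (by decide), hadj 0 2 (by decide)⟩, ?_,
    he' 0 1 (by decide), he' 0 2 (by decide), he' 1 2 (by decide)⟩
  · have hl' : ∀ i, i ≠ k → 2 ≤ (p i).length := fun i hi => hl i (hne i) (hna i hi)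
    fin_cases k
    · exact Or.inr (Or.inr ⟨hl' 1 (by decide), hl' 2 (by decide)⟩)
    · exact Or.inr (Or.inl ⟨hl' 0 (by decide), hl' 2 (by decide)⟩)
    · exact Or.inl ⟨hl' 0 (by decide), hl' 1 (by decide)⟩
  · rintro w (⟨h1, h2⟩ | ⟨h1, h2⟩ | ⟨h1, h2⟩)
    · exact hd' 0 1 (by decide) w h1 h2
    · exact hd' 0 2 (by decide) w h1 h2
    · exact hd' 1 2 (by decide) w h1 h2

/-- A prism from three connected sets. -/
lemma prism_of_sets {G : SimpleGraph V} (s t : Fin 3 → V) (M : Fin 3 → Set V)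
    (hc : ∀ i, Conn G (M i)) (hs : ∀ i, s i ∈ M i) (ht : ∀ i, t i ∈ M i)
    (hne : ∀ i, s i ≠ t i) (hadjs : ∀ i j, i ≠ j → G.Adj (s i) (s j))
    (hadj : ∀ i j, i ≠ j → G.Adj (t i) (t j))
    (hd : ∀ i j, i ≠ j → ∀ w ∈ M i, ∀ z ∈ M j,
      w ≠ z ∧ (G.Adj w z → (w = s i ∧ z = s j) ∨ (w = t i ∧ z = t j))) : ContainsPrism G := by
  choose p hp hsup hl1 hl using fun i => exists_induced (hc i) (hs i) (ht i)
  have hd' : ∀ i j, i ≠ j → ∀ w, ¬ (w ∈ (p i).support ∧ w ∈ (p j).support) := by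
    rintro i j hij w ⟨h1, h2⟩
    exact (hd i j hij w (hsup i w h1) w (hsup j w h2)).1 rfl
  have he' : ∀ i j, i ≠ j → ∀ w z, w ∈ (p i).support → z ∈ (p j).support →
      G.Adj w z → (w = s i ∧ z = s j) ∨ (w = t i ∧ z = t j) := by
    intro i j hij w z h1 h2
    exact (hd i j hij w (hsup i w h1) z (hsup j z h2)).2
  exact ⟨s 0, t 0, s 1, t 1, s 2, t 2, p 0, p 1, p 2, ⟨hp 0, hp 1, hp 2⟩,
    ⟨hl1 0 (hne 0), hl1 1 (hne 1), hl1 2 (hne 2)⟩,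
    ⟨hadjs 0 1 (by decide), hadjs 1 2 (by decide), hadjs 0 2 (by decide)⟩,
    ⟨hadj 0 1 (by decide), hadj 1 2 (by decide), hadj 0 2 (by decide)⟩,
    fun w => ⟨hd' 0 1 (by decide) w, hd' 0 2 (by decide) w, hd' 1 2 (by decide) w⟩,
    he' 0 1 (by decide), he' 0 2 (by decide), he' 1 2 (by decide)⟩

/-- The standing hypotheses. -/
structure Setup (G : SimpleGraph V) (A B C : Set V) : Prop where
  dAB : ∀ a ∈ A, a ∉ B
  dAC : ∀ a ∈ A, a ∉ C
  dBC : ∀ a ∈ B, a ∉ C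
  anti : ∀ a ∈ A, ∀ b ∈ B, ¬ G.Adj a b
  ind : ∀ x ∈ C, ∀ y ∈ C, ¬ G.Adj x y
  nth : ¬ ContainsTheta G
  npr : ¬ ContainsPrism G
  npy : ¬ ContainsPyramid G
  domA : ∀ c ∈ C, ∃ a ∈ A, G.Adj c a
  domB : ∀ c ∈ C, ∃ b ∈ B, G.Adj c b
  cA : Conn G A
  cB : Conn G B

lemma Setup.symm {G : SimpleGraph V} {A B C : Set V} (h : Setup G A B C) : Setup G B A C :=
  ⟨fun b hb ha => h.dAB b ha hb, h.dBC, h.dAC, fun b hb a ha hab => h.anti a ha b hb hab.symm,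
    h.ind, h.nth, h.npr, h.npy, h.domB, h.domA, h.cB, h.cA⟩

/-- A claw-type tripod through `X` attached to `c 0, c 1, c 2`. -/
def IsClaw (G : SimpleGraph V) (X : Set V) (c : Fin 3 → V) (u : V) (L : Fin 3 → Set V) : Prop :=
  (∀ i, u ∈ L i ∧ c i ∈ L i ∧ Conn G (L i) ∧ ∀ w ∈ L i, w = u ∨ w ∈ X ∨ w = c i) ∧
  (u ∈ X ∨ ∃ i, u = c i) ∧
  ∀ i j, i ≠ j → ∀ w ∈ L i, ∀ z ∈ L j, w ≠ u → z ≠ u → w ≠ z ∧ ¬ G.Adj w z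

/-- A triangle-type tripod through `X` attached to `c 0, c 1, c 2`. -/
def IsTri (G : SimpleGraph V) (X : Set V) (c : Fin 3 → V) (t : Fin 3 → V)
    (L : Fin 3 → Set V) : Prop :=
  (∀ i, t i ∈ L i ∧ c i ∈ L i ∧ Conn G (L i) ∧ ∀ w ∈ L i, w ∈ X ∨ w = c i) ∧
  (∀ i j, i ≠ j → G.Adj (t i) (t j)) ∧
  ∀ i j, i ≠ j → ∀ w ∈ L i, ∀ z ∈ L j, w ≠ z ∧ (G.Adj w z → w = t i ∧ z = t j)

lemma IsClaw.perm {G : SimpleGraph V} {X : Set V} {c : Fin 3 → V} {u : V} {L : Fin 3 → Set V}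
    (h : IsClaw G X c u L) (σ : Equiv.Perm (Fin 3)) :
    IsClaw G X (fun i => c (σ i)) u (fun i => L (σ i)) := by
  refine ⟨fun i => h.1 (σ i), ?_, fun i j hij => h.2.2 (σ i) (σ j) (by simpa using hij)⟩
  rcases h.2.1 with h1 | ⟨i, hi⟩
  · exact Or.inl h1
  · exact Or.inr ⟨σ.symm i, by simpa using hi⟩

lemma IsTri.perm {G : SimpleGraph V} {X : Set V} {c t : Fin 3 → V} {L : Fin 3 → Set V}
    (h : IsTri G X c t L) (σ : Equiv.Perm (Fin 3)) :
    IsTri G X (fun i => c (σ i)) (fun i => t (σ i)) (fun i => L (σ i)) :=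
  ⟨fun i => h.1 (σ i), fun i j hij => h.2.1 (σ i) (σ j) (by simpa using hij),
    fun i j hij => h.2.2 (σ i) (σ j) (by simpa using hij)⟩

lemma claw_mk {G : SimpleGraph V} {X : Set V} {a b z u : V} {L0 L1 L2 : Set V}
    (h0 : u ∈ L0 ∧ a ∈ L0 ∧ Conn G L0 ∧ ∀ w ∈ L0, w = u ∨ w ∈ X ∨ w = a)
    (h1 : u ∈ L1 ∧ b ∈ L1 ∧ Conn G L1 ∧ ∀ w ∈ L1, w = u ∨ w ∈ X ∨ w = b)
    (h2 : u ∈ L2 ∧ z ∈ L2 ∧ Conn G L2 ∧ ∀ w ∈ L2, w = u ∨ w ∈ X ∨ w = z)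
    (hu : u ∈ X ∨ u = a ∨ u = b ∨ u = z)
    (h01 : ∀ w ∈ L0, ∀ y ∈ L1, w ≠ u → y ≠ u → w ≠ y ∧ ¬ G.Adj w y)
    (h02 : ∀ w ∈ L0, ∀ y ∈ L2, w ≠ u → y ≠ u → w ≠ y ∧ ¬ G.Adj w y)
    (h12 : ∀ w ∈ L1, ∀ y ∈ L2, w ≠ u → y ≠ u → w ≠ y ∧ ¬ G.Adj w y) :
    IsClaw G X ![a, b, z] u ![L0, L1, L2] := by
  have sw : ∀ L M : Set V, (∀ w ∈ L, ∀ y ∈ M, w ≠ u → y ≠ u → w ≠ y ∧ ¬ G.Adj w y) →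
      ∀ w ∈ M, ∀ y ∈ L, w ≠ u → y ≠ u → w ≠ y ∧ ¬ G.Adj w y := by
    intro L M h w hw y hy h3 h4
    have := h y hy w hw h4 h3
    exact ⟨this.1.symm, fun h5 => this.2 h5.symm⟩
  refine ⟨?_, ?_, ?_⟩
  · intro i; fin_cases i
    · exact h0
    · exact h1
    · exact h2
  · rcases hu with h | h | h | h
    · exact Or.inl h
    · exact Or.inr ⟨0, h⟩
    · exact Or.inr ⟨1, h⟩
    · exact Or.inr ⟨2, h⟩
  · intro i j hij
    fin_cases i <;> fin_cases j
    · exact absurd rfl hij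
    · exact h01
    · exact h02
    · exact sw _ _ h01
    · exact absurd rfl hij
    · exact h12
    · exact sw _ _ h02
    · exact sw _ _ h12
    · exact absurd rfl hij

lemma tri_mk {G : SimpleGraph V} {X : Set V} {a b z t0 t1 t2 : V} {L0 L1 L2 : Set V}
    (h0 : t0 ∈ L0 ∧ a ∈ L0 ∧ Conn G L0 ∧ ∀ w ∈ L0, w ∈ X ∨ w = a)
    (h1 : t1 ∈ L1 ∧ b ∈ L1 ∧ Conn G L1 ∧ ∀ w ∈ L1, w ∈ X ∨ w = b)
    (h2 : t2 ∈ L2 ∧ z ∈ L2 ∧ Conn G L2 ∧ ∀ w ∈ L2, w ∈ X ∨ w = z)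
    (e01 : G.Adj t0 t1) (e02 : G.Adj t0 t2) (e12 : G.Adj t1 t2)
    (h01 : ∀ w ∈ L0, ∀ y ∈ L1, w ≠ y ∧ (G.Adj w y → w = t0 ∧ y = t1))
    (h02 : ∀ w ∈ L0, ∀ y ∈ L2, w ≠ y ∧ (G.Adj w y → w = t0 ∧ y = t2))
    (h12 : ∀ w ∈ L1, ∀ y ∈ L2, w ≠ y ∧ (G.Adj w y → w = t1 ∧ y = t2)) :
    IsTri G X ![a, b, z] ![t0, t1, t2] ![L0, L1, L2] := by
  have sw : ∀ (L M : Set V) (s t : V),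
      (∀ w ∈ L, ∀ y ∈ M, w ≠ y ∧ (G.Adj w y → w = s ∧ y = t)) →
      ∀ w ∈ M, ∀ y ∈ L, w ≠ y ∧ (G.Adj w y → w = t ∧ y = s) := by
    intro L M s t h w hw y hy
    have := h y hy w hw
    exact ⟨this.1.symm, fun h5 => (this.2 h5.symm).symm⟩
  refine ⟨?_, ?_, ?_⟩
  · intro i; fin_cases i
    · exact h0
    · exact h1
    · exact h2
  · intro i j hij
    fin_cases i <;> fin_cases j
    · exact absurd rfl hij
    · exact e01
    · exact e02
    · exact e01.symm
    · exact absurd rfl hij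
    · exact e12
    · exact e02.symm
    · exact e12.symm
    · exact absurd rfl hij
  · intro i j hij
    fin_cases i <;> fin_cases j
    · exact absurd rfl hij
    · exact h01
    · exact h02
    · exact sw _ _ _ _ h01
    · exact absurd rfl hij
    · exact h12
    · exact sw _ _ _ _ h02
    · exact sw _ _ _ _ h12
    · exact absurd rfl hij

section compat
variable {G : SimpleGraph V} {A B C : Set V} {c : Fin 3 → V}

lemma compat_CC (S : Setup G A B C) {u v : V} {L M : Fin 3 → Set V}
    (h1 : IsClaw G A c u L) (h2 : IsClaw G B c v M) : u = v ∨ G.Adj u v := by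
  by_contra hcon
  push Not at hcon
  obtain ⟨hne, hna⟩ := hcon
  apply S.nth
  have mix : ∀ i j, i ≠ j → ∀ w ∈ L i, ∀ z ∈ M j, w ≠ u → w ≠ v → z ≠ u → z ≠ v →
      w ≠ z ∧ ¬ G.Adj w z := by
    intro i j hij w hw z hz a1 a2 a3 a4
    rcases (h1.1 i).2.2.2 w hw with h | h | h
    · exact absurd h a1
    · rcases (h2.1 j).2.2.2 z hz with h' | h' | h'
      · exact absurd h' a4
      · exact ⟨fun e => S.dAB w h (e ▸ h'), S.anti w h z h'⟩
      · exact h1.2.2 i j hij w hw z (h' ▸ (h1.1 j).2.1) a1 a3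
    · exact h2.2.2 i j hij w (h ▸ (h2.1 i).2.1) z hz a2 a4
  refine theta_of_sets (u := u) (v := v) (fun i => L i ∪ M i)
    (fun i => conn_union (h1.1 i).2.2.1 (h2.1 i).2.2.1 (h1.1 i).2.1 (h2.1 i).2.1)
    (fun i => Or.inl (h1.1 i).1) (fun i => Or.inr (h2.1 i).1) hne hna ?_
  rintro i j hij w (hw | hw) z (hz | hz) a1 a2 a3 a4
  · exact h1.2.2 i j hij w hw z hz a1 a3
  · exact mix i j hij w hw z hz a1 a2 a3 a4
  · have := mix j i hij.symm z hz w hw a3 a4 a1 a2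
    exact ⟨this.1.symm, fun e => this.2 e.symm⟩
  · exact h2.2.2 i j hij w hw z hz a2 a4

lemma compat_CT (S : Setup G A B C) (hc : ∀ i, c i ∈ C) {u : V} {t : Fin 3 → V}
    {L M : Fin 3 → Set V}
    (h1 : IsClaw G A c u L) (h2 : IsTri G B c t M) : ∃ i, u = t i := by
  by_contra hcon
  push Not at hcon
  apply S.npy
  have mix : ∀ i j, i ≠ j → ∀ w ∈ L i, ∀ z ∈ M j, w ≠ u → z ≠ u →
      w ≠ z ∧ (G.Adj w z → w = t i ∧ z = t j) := by
    intro i j hij w hw z hz a1 a3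
    rcases (h1.1 i).2.2.2 w hw with h | h | h
    · exact absurd h a1
    · rcases (h2.1 j).2.2.2 z hz with h' | h'
      · exact ⟨fun e => S.dAB w h (e ▸ h'), fun e => absurd e (S.anti w h z h')⟩
      · have := h1.2.2 i j hij w hw z (h' ▸ (h1.1 j).2.1) a1 a3
        exact ⟨this.1, fun e => absurd e this.2⟩
    · exact h2.2.2 i j hij w (h ▸ (h2.1 i).2.1) z hz
  have hk : ∃ k : Fin 3, ∀ i, i ≠ k → ¬ G.Adj u (t i) := by
    rcases h1.2.1 with hu | ⟨k, hk⟩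
    · have ht : ∀ i, G.Adj u (t i) → t i ∈ C := by
        intro i hi
        rcases (h2.1 i).2.2.2 _ (h2.1 i).1 with h | h
        · exact absurd hi (S.anti u hu _ h)
        · rw [h]; exact hc i
      by_cases hex : ∃ k, G.Adj u (t k)
      · obtain ⟨k, hk⟩ := hex
        exact ⟨k, fun i hi h => S.ind _ (ht i h) _ (ht k hk) (h2.2.1 i k hi)⟩
      · push Not at hex
        exact ⟨0, fun i _ => hex i⟩
    · refine ⟨k, fun i hi h => ?_⟩
      have := (h2.2.2 k i hi.symm u (hk ▸ (h2.1 k).2.1) (t i) (h2.1 i).1).2 h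
      exact hcon k this.1
  obtain ⟨k, hk⟩ := hk
  refine pyramid_of_sets (u := u) t (fun i => L i ∪ M i)
    (fun i => conn_union (h1.1 i).2.2.1 (h2.1 i).2.2.1 (h1.1 i).2.1 (h2.1 i).2.1)
    (fun i => Or.inl (h1.1 i).1) (fun i => Or.inr (h2.1 i).1) hcon h2.2.1 k hk ?_
  rintro i j hij w (hw | hw) z (hz | hz) a1 a3
  · have := h1.2.2 i j hij w hw z hz a1 a3
    exact ⟨this.1, fun e => absurd e this.2⟩
  · exact mix i j hij w hw z hz a1 a3
  · have := mix j i hij.symm z hz w hw a3 a1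
    exact ⟨this.1.symm, fun e => (this.2 e.symm).symm⟩
  · exact h2.2.2 i j hij w hw z hz

lemma compat_TT (S : Setup G A B C) {t s : Fin 3 → V} {L M : Fin 3 → Set V}
    (h1 : IsTri G A c t L) (h2 : IsTri G B c s M) : ∃ i, t i = s i := by
  by_contra hcon
  push Not at hcon
  apply S.npr
  have mix : ∀ i j, i ≠ j → ∀ w ∈ L i, ∀ z ∈ M j,
      w ≠ z ∧ (G.Adj w z → (w = t i ∧ z = t j) ∨ (w = s i ∧ z = s j)) := by
    intro i j hij w hw z hz
    rcases (h1.1 i).2.2.2 w hw with h | h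
    · rcases (h2.1 j).2.2.2 z hz with h' | h'
      · exact ⟨fun e => S.dAB w h (e ▸ h'), fun e => absurd e (S.anti w h z h')⟩
      · have := h1.2.2 i j hij w hw z (h' ▸ (h1.1 j).2.1)
        exact ⟨this.1, fun e => Or.inl (this.2 e)⟩
    · have := h2.2.2 i j hij w (h ▸ (h2.1 i).2.1) z hz
      exact ⟨this.1, fun e => Or.inr (this.2 e)⟩
  refine prism_of_sets t s (fun i => L i ∪ M i)
    (fun i => conn_union (h1.1 i).2.2.1 (h2.1 i).2.2.1 (h1.1 i).2.1 (h2.1 i).2.1)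
    (fun i => Or.inl (h1.1 i).1) (fun i => Or.inr (h2.1 i).1) hcon h1.2.1 h2.2.1 ?_
  rintro i j hij w (hw | hw) z (hz | hz)
  · have := h1.2.2 i j hij w hw z hz
    exact ⟨this.1, fun e => Or.inl (this.2 e)⟩
  · exact mix i j hij w hw z hz
  · have := mix j i hij.symm z hz w hw
    exact ⟨this.1.symm, fun e => (this.2 e.symm).imp And.symm And.symm⟩
  · have := h2.2.2 i j hij w hw z hz
    exact ⟨this.1, fun e => Or.inr (this.2 e)⟩

end compat

/-- The outcome of attaching a connected set to an induced path. -/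
def CoreOut (G : SimpleGraph V) (X : Set V) (n : ℕ) (p : ℕ → V) (z q : V) : Prop :=
  ((∃ L, IsClaw G X ![p 0, p n, z] q L) ∧
      ∃ i j, i + 2 ≤ j ∧ j ≤ n ∧ G.Adj q (p i) ∧ G.Adj q (p j)) ∨
  (∃ i L, i < n ∧ G.Adj q (p i) ∧ G.Adj q (p (i+1)) ∧
      (∀ j ≤ n, G.Adj q (p j) → j = i ∨ j = i + 1) ∧
      IsTri G X ![p 0, p n, z] ![p i, p (i+1), q] L) ∨
  (∃ i L, i ≤ n ∧ G.Adj q (p i) ∧ (∀ j ≤ n, G.Adj q (p j) → j = i) ∧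
      IsClaw G X ![p 0, p n, z] (p i) L)

lemma core {G : SimpleGraph V} {X : Set V} {n : ℕ} {p : ℕ → V} (hp : IP G n p)
    (hX : ∀ i, 0 < i → i < n → p i ∈ X) {Q : Set V} (hQ : Conn G Q) {z q : V}
    (hz : z ∈ Q) (hq : q ∈ Q) (hQX : ∀ w ∈ Q, w ∈ X ∨ w = z)
    (hdis : ∀ w ∈ Q, ∀ i ≤ n, w ≠ p i) (hqn : ∃ i ≤ n, G.Adj q (p i))
    (hno : ∀ w ∈ Q, w ≠ q → ∀ i ≤ n, ¬ G.Adj w (p i)) : CoreOut G X n p z q := by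
  classical
  obtain ⟨i, ⟨hi, hqi⟩, himin⟩ : ∃ i, (i ≤ n ∧ G.Adj q (p i)) ∧
      ∀ j ≤ n, G.Adj q (p j) → i ≤ j := by
    refine ⟨Nat.find hqn, Nat.find_spec hqn, fun j hj h => Nat.find_min' hqn ⟨hj, h⟩⟩
  obtain ⟨j, ⟨hj, hqj⟩, hjmax⟩ : ∃ j, (j ≤ n ∧ G.Adj q (p j)) ∧
      ∀ k ≤ n, G.Adj q (p k) → k ≤ j := by
    have h := Nat.findGreatest_spec (P := fun k => k ≤ n ∧ G.Adj q (p k)) hi ⟨hi, hqi⟩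
    exact ⟨_, h, fun k hk h' =>
      Nat.le_findGreatest (P := fun k => k ≤ n ∧ G.Adj q (p k)) hk ⟨hk, h'⟩⟩
  have hij : i ≤ j := himin j hj hqj
  by_cases h2 : i + 2 ≤ j
  · left
    refine ⟨⟨![insert q {w | ∃ k, 0 ≤ k ∧ k ≤ i ∧ w = p k},
      insert q {w | ∃ k, j ≤ k ∧ k ≤ n ∧ w = p k}, Q], ?_⟩, i, j, h2, hj, hqi, hqj⟩
    apply claw_mk
    · refine ⟨Set.mem_insert _ _, Or.inr ⟨0, le_rfl, by omega, rfl⟩,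
        conn_insert (conn_seg hp hi) ⟨i, by omega, le_rfl, rfl⟩ hqi, ?_⟩
      rintro w (rfl | ⟨k, -, hk, rfl⟩)
      · exact Or.inl rfl
      · rcases Nat.eq_zero_or_pos k with rfl | h0
        · exact Or.inr (Or.inr rfl)
        · exact Or.inr (Or.inl (hX k h0 (by omega)))
    · refine ⟨Set.mem_insert _ _, Or.inr ⟨n, by omega, le_rfl, rfl⟩,
        conn_insert (conn_seg hp le_rfl) ⟨j, le_rfl, hj, rfl⟩ hqj, ?_⟩
      rintro w (rfl | ⟨k, hk, hk', rfl⟩)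
      · exact Or.inl rfl
      · rcases Nat.eq_or_lt_of_le hk' with rfl | h0
        · exact Or.inr (Or.inr rfl)
        · exact Or.inr (Or.inl (hX k (by omega) h0))
    · exact ⟨hq, hz, hQ, fun w hw => Or.inr (hQX w hw)⟩
    · rcases hQX q hq with h | h
      · exact Or.inl h
      · exact Or.inr (Or.inr (Or.inr h))
    · rintro w (rfl | ⟨k, -, hk, rfl⟩) y (rfl | ⟨l, hl, hl', rfl⟩) h3 h4
      · exact absurd rfl h3
      · exact absurd rfl h3
      · exact absurd rfl h4
      · refine ⟨fun e => ?_, fun e => ?_⟩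
        · have := hp.1 k (by omega) l hl' e; omega
        · have := (hp.2 k (by omega) l hl').1 e; omega
    · rintro w (rfl | ⟨k, -, hk, rfl⟩) y hy h3 h4
      · exact absurd rfl h3
      · exact ⟨fun e => hdis y hy k (by omega) e.symm,
          fun e => hno y hy h4 k (by omega) e.symm⟩
    · rintro w (rfl | ⟨k, hk', hk, rfl⟩) y hy h3 h4
      · exact absurd rfl h3
      · exact ⟨fun e => hdis y hy k (by omega) e.symm,
          fun e => hno y hy h4 k (by omega) e.symm⟩
  · right
    by_cases h1 : j = i + 1
    · left
      subst h1
      refine ⟨i, ![{w | ∃ k, 0 ≤ k ∧ k ≤ i ∧ w = p k},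
        {w | ∃ k, i + 1 ≤ k ∧ k ≤ n ∧ w = p k}, Q], by omega, hqi, hqj, ?_, ?_⟩
      · intro k hk h
        have := himin k hk h
        have := hjmax k hk h
        omega
      apply tri_mk
      · refine ⟨⟨i, by omega, le_rfl, rfl⟩, ⟨0, le_rfl, by omega, rfl⟩, conn_seg hp hi, ?_⟩
        rintro w ⟨k, -, hk, rfl⟩
        rcases Nat.eq_zero_or_pos k with rfl | h0
        · exact Or.inr rfl
        · exact Or.inl (hX k h0 (by omega))
      · refine ⟨⟨i+1, le_rfl, hj, rfl⟩, ⟨n, by omega, le_rfl, rfl⟩, conn_seg hp le_rfl, ?_⟩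
        rintro w ⟨k, hk, hk', rfl⟩
        rcases Nat.eq_or_lt_of_le hk' with rfl | h0
        · exact Or.inr rfl
        · exact Or.inl (hX k (by omega) h0)
      · exact ⟨hq, hz, hQ, hQX⟩
      · exact (hp.2 i hi (i+1) hj).2 (Or.inl rfl)
      · exact hqi.symm
      · exact hqj.symm
      · rintro w ⟨k, -, hk, rfl⟩ y ⟨l, hl, hl', rfl⟩
        refine ⟨fun e => ?_, fun e => ?_⟩
        · have := hp.1 k (by omega) l hl' e; omega
        · have := (hp.2 k (by omega) l hl').1 e
          obtain rfl : k = i := by omega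
          obtain rfl : l = k + 1 := by omega
          exact ⟨rfl, rfl⟩
      · rintro w ⟨k, -, hk, rfl⟩ y hy
        refine ⟨fun e => hdis y hy k (by omega) e.symm, fun e => ?_⟩
        have hyq : y = q := by
          by_contra h
          exact hno y hy h k (by omega) e.symm
        subst hyq
        have := himin k (by omega) e.symm
        obtain rfl : k = i := by omega
        exact ⟨rfl, rfl⟩
      · rintro w ⟨k, hk', hk, rfl⟩ y hy
        refine ⟨fun e => hdis y hy k (by omega) e.symm, fun e => ?_⟩
        have hyq : y = q := by
          by_contra h
          exact hno y hy h k (by omega) e.symm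
        subst hyq
        have := hjmax k (by omega) e.symm
        obtain rfl : k = i + 1 := by omega
        exact ⟨rfl, rfl⟩
    · right
      obtain rfl : j = i := by omega
      refine ⟨j, ![{w | ∃ k, 0 ≤ k ∧ k ≤ j ∧ w = p k},
        {w | ∃ k, j ≤ k ∧ k ≤ n ∧ w = p k}, insert (p j) Q], hi, hqi, ?_, ?_⟩
      · intro k hk h
        have := himin k hk h
        have := hjmax k hk h
        omega
      apply claw_mk
      · refine ⟨⟨j, by omega, le_rfl, rfl⟩, ⟨0, le_rfl, by omega, rfl⟩, conn_seg hp hi, ?_⟩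
        rintro w ⟨k, -, hk, rfl⟩
        rcases Nat.eq_zero_or_pos k with rfl | h0
        · exact Or.inr (Or.inr rfl)
        · rcases Nat.eq_or_lt_of_le hk with rfl | h
          · exact Or.inl rfl
          · exact Or.inr (Or.inl (hX k h0 (by omega)))
      · refine ⟨⟨j, le_rfl, hj, rfl⟩, ⟨n, by omega, le_rfl, rfl⟩, conn_seg hp le_rfl, ?_⟩
        rintro w ⟨k, hk, hk', rfl⟩
        rcases Nat.eq_or_lt_of_le hk' with rfl | h0
        · exact Or.inr (Or.inr rfl)
        · rcases Nat.eq_or_lt_of_le hk with rfl | h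
          · exact Or.inl rfl
          · exact Or.inr (Or.inl (hX k (by omega) (by omega)))
      · refine ⟨Set.mem_insert _ _, Or.inr hz, conn_insert hQ hq hqi.symm, ?_⟩
        rintro w (rfl | hw)
        · exact Or.inl rfl
        · exact Or.inr (hQX w hw)
      · rcases Nat.eq_zero_or_pos j with rfl | h0
        · exact Or.inr (Or.inl rfl)
        · rcases Nat.eq_or_lt_of_le hj with rfl | h
          · exact Or.inr (Or.inr (Or.inl rfl))
          · exact Or.inl (hX j h0 h)
      · rintro w ⟨k, -, hk, rfl⟩ y ⟨l, hl, hl', rfl⟩ h3 h4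
        have hk' : k ≠ j := fun e => h3 (e ▸ rfl)
        have hl'' : l ≠ j := fun e => h4 (e ▸ rfl)
        refine ⟨fun e => ?_, fun e => ?_⟩
        · have := hp.1 k (by omega) l hl' e; omega
        · have := (hp.2 k (by omega) l hl').1 e; omega
      · rintro w ⟨k, -, hk, rfl⟩ y (rfl | hy) h3 h4
        · exact absurd rfl h4
        have hk' : k ≠ j := fun e => h3 (e ▸ rfl)
        refine ⟨fun e => hdis y hy k (by omega) e.symm, fun e => ?_⟩
        have hyq : y = q := by
          by_contra h
          exact hno y hy h k (by omega) e.symm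
        subst hyq
        have := himin k (by omega) e.symm
        omega
      · rintro w ⟨k, hk1, hk, rfl⟩ y (rfl | hy) h3 h4
        · exact absurd rfl h4
        have hk' : k ≠ j := fun e => h3 (e ▸ rfl)
        refine ⟨fun e => hdis y hy k (by omega) e.symm, fun e => ?_⟩
        have hyq : y = q := by
          by_contra h
          exact hno y hy h k (by omega) e.symm
        subst hyq
        have := hjmax k (by omega) e.symm
        omega

lemma exists_Q_walk {G : SimpleGraph V} {P : Set V} {u v : V} (w : G.Walk u v) (hu : u ∉ P)
    (hv : v ∈ P) : ∃ q, ∃ Q : Set V, Conn G Q ∧ u ∈ Q ∧ q ∈ Q ∧ (∀ x ∈ Q, x ∈ w.support) ∧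
      (∀ x ∈ Q, x ∉ P) ∧ (∃ x ∈ P, G.Adj q x) ∧ ∀ x ∈ Q, x ≠ q → ∀ y ∈ P, ¬ G.Adj x y := by
  induction w with
  | nil => exact absurd hv hu
  | @cons u u' v h w ih =>
    by_cases hn : ∃ x ∈ P, G.Adj u x
    · refine ⟨u, {u}, conn_singleton G u, rfl, rfl, ?_, ?_, hn, ?_⟩
      · rintro x rfl; simp
      · rintro x rfl; exact hu
      · rintro x rfl hx; exact absurd rfl hx
    · push Not at hn
      obtain ⟨q, Q, h1, h2, h3, h4, h5, h6, h7⟩ := ih (fun h' => hn _ h' h) hv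
      refine ⟨q, insert u Q, conn_insert h1 h2 h, Set.mem_insert _ _, Or.inr h3, ?_, ?_, h6, ?_⟩
      · rintro x (rfl | hx)
        · simp
        · simp [h4 x hx]
      · rintro x (rfl | hx)
        · exact hu
        · exact h5 x hx
      · rintro x (rfl | hx) hxq
        · exact hn
        · exact h7 x hx hxq

/-- Attach a vertex `z` through `X` to an induced path with interior in `X`. -/
lemma attach {G : SimpleGraph V} {X : Set V} (hXc : Conn G X) {n : ℕ} {p : ℕ → V}
    (hp : IP G n p) (hn : 2 ≤ n)
    (hX : ∀ i, 0 < i → i < n → p i ∈ X) {z : V} (hzX : ∃ x ∈ X, G.Adj z x)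
    (hzp : ∀ i ≤ n, z ≠ p i) :
    ∃ q, (q ∈ X ∨ q = z) ∧ (∀ i ≤ n, q ≠ p i) ∧
      (q ≠ z → ∀ i ≤ n, ¬ G.Adj z (p i)) ∧ CoreOut G X n p z q := by
  obtain ⟨x, hx, hzx⟩ := hzX
  obtain ⟨w, hw⟩ := conn_insert hXc hx hzx z (Set.mem_insert _ _) (p 1)
    (Or.inr (hX 1 (by omega) (by omega)))
  obtain ⟨q, Q, h1, h2, h3, h4, h5, h6, h7⟩ := exists_Q_walk (P := {v | ∃ i ≤ n, v = p i}) w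
    (by rintro ⟨i, hi, h⟩; exact hzp i hi h) ⟨1, by omega, rfl⟩
  have hQX : ∀ w ∈ Q, w ∈ X ∨ w = z := fun y hy => (hw y (h4 y hy)).symm
  have hqp : ∀ y ∈ Q, ∀ i ≤ n, y ≠ p i := fun y hy i hi e => h5 y hy ⟨i, hi, e⟩
  refine ⟨q, hQX q h3, hqp q h3, fun hqz i hi => h7 z h2 hqz.symm _ ⟨i, hi, rfl⟩, ?_⟩
  refine core hp hX h1 h2 h3 hQX hqp ?_ (fun y hy hyq i hi => h7 y hy hyq _ ⟨i, hi, rfl⟩)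
  obtain ⟨_, ⟨i, hi, rfl⟩, h⟩ := h6
  exact ⟨i, hi, h⟩

section perms
variable {G : SimpleGraph V} {X : Set V}

lemma claw_rot {a b z u : V} {L} (h : IsClaw G X ![a, b, z] u L) :
    ∃ L, IsClaw G X ![b, z, a] u L := by
  have h' := h.perm (finRotate 3)
  have e : (fun i => ![a, b, z] ((finRotate 3) i)) = ![b, z, a] := by
    funext i; fin_cases i <;> rfl
  rw [e] at h'
  exact ⟨_, h'⟩

lemma claw_swap {a b z u : V} {L} (h : IsClaw G X ![a, b, z] u L) :
    ∃ L, IsClaw G X ![b, a, z] u L := by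
  have h' := h.perm (Equiv.swap 0 1)
  have e : (fun i => ![a, b, z] ((Equiv.swap (0 : Fin 3) 1) i)) = ![b, a, z] := by
    funext i; fin_cases i <;> rfl
  rw [e] at h'
  exact ⟨_, h'⟩

lemma tri_rot {a b z s t r : V} {L} (h : IsTri G X ![a, b, z] ![s, t, r] L) :
    ∃ L, IsTri G X ![b, z, a] ![t, r, s] L := by
  have h' := h.perm (finRotate 3)
  have e : ∀ a b z : V, (fun i => ![a, b, z] ((finRotate 3) i)) = ![b, z, a] := by
    intro a b z
    funext i; fin_cases i <;> rfl
  rw [e, e] at h'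
  exact ⟨_, h'⟩

lemma tri_swap {a b z s t r : V} {L} (h : IsTri G X ![a, b, z] ![s, t, r] L) :
    ∃ L, IsTri G X ![b, a, z] ![t, s, r] L := by
  have h' := h.perm (Equiv.swap 0 1)
  have e : ∀ a b z : V,
      (fun i => ![a, b, z] ((Equiv.swap (0 : Fin 3) 1) i)) = ![b, a, z] := by
    intro a b z
    funext i; fin_cases i <;> rfl
  rw [e, e] at h'
  exact ⟨_, h'⟩
end perms

/-- `p` is a shortest path of length `n` with interior in `X`. -/
def SP (G : SimpleGraph V) (X : Set V) (n : ℕ) (p : ℕ → V) : Prop :=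
  IP G n p ∧ 2 ≤ n ∧ (∀ i, 0 < i → i < n → p i ∈ X) ∧
  ∀ q : G.Walk (p 0) (p n), (∀ w ∈ q.support, w = p 0 ∨ w = p n ∨ w ∈ X) → n ≤ q.length

lemma exists_SP {G : SimpleGraph V} {X : Set V} (hX : Conn G X) {a b : V} (hne : a ≠ b)
    (hna : ¬ G.Adj a b) (ha : ∃ x ∈ X, G.Adj a x) (hb : ∃ x ∈ X, G.Adj b x) :
    ∃ n p, SP G X n p ∧ p 0 = a ∧ p n = b := by
  obtain ⟨x, hx, hax⟩ := ha
  obtain ⟨y, hy, hby⟩ := hb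
  have h1 := conn_insert (conn_insert hX hy hby) (Or.inr hx) hax
  obtain ⟨n, p, hp, h0, hn, hpS, hmin⟩ := exists_ip h1 (Set.mem_insert _ _)
    (Or.inr (Set.mem_insert _ _))
  have h2 : 2 ≤ n := by
    by_contra h
    have : n = 0 ∨ n = 1 := by omega
    rcases this with rfl | rfl
    · exact hne (h0.symm.trans hn)
    · apply hna
      rw [← h0, ← hn]
      exact (hp.2 0 (by omega) 1 (by omega)).2 (Or.inl rfl)
  refine ⟨n, p, ⟨hp, h2, ?_, ?_⟩, h0, hn⟩
  · intro i h3 h4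
    rcases hpS i (by omega) with h | h | h
    · rw [← h0] at h
      have := hp.1 i (by omega) 0 (by omega) h
      omega
    · rw [← hn] at h
      have := hp.1 i (by omega) n (by omega) h
      omega
    · exact h
  · subst h0; subst hn
    intro q hq
    exact hmin q hq

lemma IP.rev {G : SimpleGraph V} {n : ℕ} {p : ℕ → V} (hp : IP G n p) :
    IP G n (fun i => p (n - i)) := by
  refine ⟨fun i hi j hj h => ?_, fun i hi j hj => ?_⟩
  · have := hp.1 (n - i) (by omega) (n - j) (by omega) h
    omega
  · rw [hp.2 (n - i) (by omega) (n - j) (by omega)]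
    omega

/-- walk along an induced path -/
lemma walk_sub {G : SimpleGraph V} {n : ℕ} {p : ℕ → V} (hp : IP G n p) {i j : ℕ} (hij : i ≤ j)
    (hj : j ≤ n) : ∃ w : G.Walk (p i) (p j), w.length = j - i ∧
      ∀ x ∈ w.support, ∃ k, i ≤ k ∧ k ≤ j ∧ x = p k := by
  obtain ⟨w, hl, hg⟩ := walk_of_ip (G := G) (n := j - i) (p := fun k => p (i + k))
    (fun k hk => (hp.2 (i+k) (by omega) (i+(k+1)) (by omega)).2 (Or.inl (by omega)))
  have e : i + (j - i) = j := by omega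
  refine ⟨w.copy (by simp) (by simp [e]), by simp [hl], ?_⟩
  intro x hx
  rw [Walk.support_copy, Walk.mem_support_iff_exists_getVert] at hx
  obtain ⟨k, rfl, hk⟩ := hx
  exact ⟨i + k, by omega, by omega, hg k (by omega)⟩

/-- In a shortest path, a vertex outside cannot make a shortcut. -/
lemma SP.short {G : SimpleGraph V} {X : Set V} {n : ℕ} {p : ℕ → V} (hp : SP G X n p)
    {q : V} (hq : q ∈ X) {i j : ℕ} (hj : j ≤ n) (h1 : G.Adj q (p i)) (hi : i ≤ n)
    (h2 : G.Adj q (p j)) : j ≤ i + 2 := by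
  by_contra hlt
  obtain ⟨w1, l1, s1⟩ := walk_sub hp.1 (i := 0) (j := i) (by omega) (by omega)
  obtain ⟨w2, l2, s2⟩ := walk_sub hp.1 (i := j) (j := n) (by omega) (by omega)
  have hm : ∀ k ≤ n, p k = p 0 ∨ p k = p n ∨ p k ∈ X := by
    intro k hk
    rcases Nat.eq_zero_or_pos k with rfl | h0
    · exact Or.inl rfl
    · rcases Nat.eq_or_lt_of_le hk with rfl | h
      · exact Or.inr (Or.inl rfl)
      · exact Or.inr (Or.inr (hp.2.2.1 k h0 h))
  have := hp.2.2.2 (w1.append (Walk.cons h1.symm (Walk.cons h2 w2))) (by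
    intro x hx
    rw [Walk.mem_support_append_iff, Walk.support_cons, Walk.support_cons] at hx
    simp only [List.mem_cons] at hx
    rcases hx with hx | rfl | rfl | hx
    · obtain ⟨k, _, hk, rfl⟩ := s1 x hx
      exact hm k (by omega)
    · exact hm i (by omega)
    · exact Or.inr (Or.inr hq)
    · obtain ⟨k, _, hk, rfl⟩ := s2 x hx
      exact hm k (by omega))
  simp [l1, l2] at this
  omega

/-- A tripod exists. -/
lemma exists_tripod {G : SimpleGraph V} {X : Set V} (hX : Conn G X) {a b z : V} (hab : a ≠ b)
    (hna : ¬ G.Adj a b) (ha : ∃ x ∈ X, G.Adj a x) (hb : ∃ x ∈ X, G.Adj b x)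
    (hz : ∃ x ∈ X, G.Adj z x) (hzX : z ∉ X) (hza : z ≠ a) (hzb : z ≠ b) :
    (∃ u L, IsClaw G X ![a, b, z] u L) ∨ (∃ t L, IsTri G X ![a, b, z] t L) := by
  obtain ⟨n, p, hp, h0, hn⟩ := exists_SP hX hab hna ha hb
  obtain ⟨q, -, -, -, h⟩ := attach hX hp.1 hp.2.1 hp.2.2.1 hz (by
    intro i hi e
    rcases Nat.eq_zero_or_pos i with rfl | h0'
    · exact hza (e.trans h0)
    · rcases Nat.eq_or_lt_of_le hi with rfl | h
      · exact hzb (e.trans hn)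
      · exact hzX (e ▸ hp.2.2.1 i h0' h))
  rw [CoreOut, h0, hn] at h
  rcases h with ⟨⟨L, hL⟩, -⟩ | ⟨i, L, -, -, -, -, h⟩ | ⟨i, L, -, -, -, h⟩
  · exact Or.inl ⟨_, _, hL⟩
  · exact Or.inr ⟨_, _, h⟩
  · exact Or.inl ⟨_, _, h⟩

/-- The tripods of `X` at `a, b, z` point at `z`. -/
def NP (G : SimpleGraph V) (X : Set V) (a b z : V) : Prop :=
  (∀ u ∈ X, ∀ L, IsClaw G X ![a, b, z] u L → G.Adj z u) ∧
  ∀ s ∈ X, ∀ t ∈ X, ∀ r ∈ X, ∀ L, ¬ IsTri G X ![a, b, z] ![s, t, r] L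

lemma exists_NP {G : SimpleGraph V} {A B C : Set V} (S : Setup G A B C) {a b z : V}
    (ha : a ∈ C) (hb : b ∈ C) (hz : z ∈ C) (hab : a ≠ b) (hza : z ≠ a) (hzb : z ≠ b) :
    NP G B a b z ∨ NP G B b z a ∨ NP G B a z b := by
  have hc : ∀ i, (![a, b, z] : Fin 3 → V) i ∈ C := by
    intro i; fin_cases i
    · exact ha
    · exact hb
    · exact hz
  have hcA : ∀ i, (![a, b, z] : Fin 3 → V) i ∉ B := fun i h => S.dBC _ h (hc i)
  have key : ∃ k : Fin 3, (∀ u ∈ B, ∀ L, IsClaw G B ![a, b, z] u L → G.Adj (![a, b, z] k) u) ∧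
      ∀ t L, IsTri G B ![a, b, z] t L → ∃ i, t i ∉ B := by
    rcases exists_tripod S.cA hab (S.ind a ha b hb) (S.domA a ha) (S.domA b hb) (S.domA z hz)
      (fun h => S.dAC z h hz) hza hzb with ⟨u, L, h⟩ | ⟨t, L, h⟩
    · rcases h.2.1 with hu | ⟨k, hk⟩
      · refine ⟨0, ?_, ?_⟩
        · intro v hv M hM
          rcases compat_CC S h hM with e | e
          · exact absurd hv (e ▸ S.dAB u hu)
          · exact absurd e (S.anti u hu v hv)
        · intro t M hM
          obtain ⟨i, hi⟩ := compat_CT S hc h hM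
          exact ⟨i, hi ▸ S.dAB u hu⟩
      · refine ⟨k, ?_, ?_⟩
        · intro v hv M hM
          rcases compat_CC S h hM with e | e
          · exact absurd hv (by rw [← e, hk]; exact hcA k)
          · rw [← hk]; exact e
        · intro t M hM
          obtain ⟨i, hi⟩ := compat_CT S hc h hM
          exact ⟨i, by rw [← hi, hk]; exact hcA k⟩
    · have ht : ∀ i, t i ∉ B := by
        intro i hi
        rcases (h.1 i).2.2.2 _ (h.1 i).1 with h' | h'
        · exact S.dAB _ h' hi
        · exact hcA i (h' ▸ hi)
      refine ⟨0, ?_, ?_⟩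
      · intro v hv M hM
        obtain ⟨i, hi⟩ := compat_CT S.symm hc hM h
        exact absurd hv (hi ▸ ht i)
      · intro s M hM
        obtain ⟨i, hi⟩ := compat_TT S h hM
        exact ⟨i, hi ▸ ht i⟩
  obtain ⟨k, h1, h2⟩ := key
  have h2' : ∀ s ∈ B, ∀ t ∈ B, ∀ r ∈ B, ∀ L, ¬ IsTri G B ![a, b, z] ![s, t, r] L := by
    intro s hs t ht r hr L hL
    obtain ⟨i, hi⟩ := h2 _ L hL
    fin_cases i
    · exact hi hs
    · exact hi ht
    · exact hi hr
  fin_cases k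
  · right; left
    refine ⟨?_, ?_⟩
    · intro u hu L hL
      obtain ⟨L', hL'⟩ := claw_rot hL
      obtain ⟨L', hL'⟩ := claw_rot hL'
      exact h1 u hu _ hL'
    · intro s hs t ht r hr L hL
      obtain ⟨L', hL'⟩ := tri_rot hL
      obtain ⟨L', hL'⟩ := tri_rot hL'
      exact h2' _ hr _ hs _ ht _ hL'
  · right; right
    refine ⟨?_, ?_⟩
    · intro u hu L hL
      obtain ⟨L', hL'⟩ := claw_rot hL
      obtain ⟨L', hL'⟩ := claw_swap hL'
      obtain ⟨L', hL'⟩ := claw_rot hL'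
      obtain ⟨L', hL'⟩ := claw_rot hL'
      exact h1 u hu _ hL'
    · intro s hs t ht r hr L hL
      obtain ⟨L', hL'⟩ := tri_rot hL
      obtain ⟨L', hL'⟩ := tri_swap hL'
      obtain ⟨L', hL'⟩ := tri_rot hL'
      obtain ⟨L', hL'⟩ := tri_rot hL'
      exact h2' _ hs _ hr _ ht _ hL'
  · left
    exact ⟨h1, h2'⟩

lemma exists_exit {G : SimpleGraph V} {B T : Set V} (hB : Conn G B) (hT : T ⊆ B)
    (hne : T.Nonempty) (hne' : ∃ b ∈ B, b ∉ T) :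
    ∃ t ∈ T, ∃ v ∈ B, v ∉ T ∧ G.Adj t v := by
  obtain ⟨t, ht⟩ := hne
  obtain ⟨b, hb, hbT⟩ := hne'
  obtain ⟨w, hw⟩ := hB t (hT ht) b hb
  obtain ⟨d, hd, h1, h2⟩ := w.exists_boundary_dart T ht hbT
  exact ⟨d.fst, h1, d.snd, hw _ (w.dart_snd_mem_support_of_mem_darts hd), h2, d.adj⟩

/-- Non-cut vertices outside a connected proper subset. -/
lemma exists_noncut {G : SimpleGraph V} {B S : Set V} (hB : Conn G B) (hS : S ⊆ B)
    (hSc : Conn G S) (hne : S.Nonempty) (hne' : ∃ b ∈ B, b ∉ S) :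
    ∃ v ∈ B, v ∉ S ∧ Conn G (B \ {v}) := by
  classical
  obtain ⟨T, hST, hT⟩ := Set.Finite.exists_le_maximal
    (s := {T : Set V | T ⊆ B ∧ Conn G T ∧ ∃ b ∈ B, b ∉ T}) (Set.toFinite _) (a := S)
    ⟨hS, hSc, hne'⟩
  obtain ⟨⟨hTB, hTc, hTn⟩, hmax⟩ := hT
  obtain ⟨t, ht, v, hv, hvT, htv⟩ := exists_exit hB hTB (hne.mono hST) hTn
  refine ⟨v, hv, fun h => hvT (hST h), ?_⟩
  have hfull : ∀ b ∈ B, b = v ∨ b ∈ T := by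
    intro b hb
    by_contra hcon
    have : insert v T ≤ T := hmax (y := insert v T)
      ⟨Set.insert_subset hv hTB, conn_insert hTc ht htv.symm, b, hb, hcon⟩ (Set.subset_insert _ _)
    exact hvT (this (Set.mem_insert _ _))
  have : B \ {v} = T := by
    ext x
    simp only [Set.mem_sdiff, Set.mem_singleton_iff]
    constructor
    · rintro ⟨h1, h2⟩
      exact (hfull x h1).resolve_left h2
    · intro h
      exact ⟨hTB h, fun e => hvT (e ▸ h)⟩
  rw [this]; exact hTc

/-- Connected component of `u` in `Y`. -/
lemma exists_comp {G : SimpleGraph V} {Y : Set V} {u : V} (hu : u ∈ Y) :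
    ∃ S ⊆ Y, u ∈ S ∧ Conn G S ∧ ∀ v ∈ S, ∀ w ∈ Y, G.Adj v w → w ∈ S := by
  classical
  obtain ⟨T, hST, hT⟩ := Set.Finite.exists_le_maximal
    (s := {T : Set V | T ⊆ Y ∧ Conn G T}) (Set.toFinite _) (a := {u})
    ⟨by simpa using hu, conn_singleton G u⟩
  obtain ⟨⟨h1, h2⟩, hmax⟩ := hT
  refine ⟨T, h1, hST rfl, h2, fun v hv w hw hvw => ?_⟩
  exact hmax (y := insert w T) ⟨Set.insert_subset hw h1, conn_insert h2 hv hvw.symm⟩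
    (Set.subset_insert _ _) (Set.mem_insert _ _)

/-- `X` is an inclusion-wise minimal connected set dominating `C`. -/
def MinDom (G : SimpleGraph V) (C B : Set V) : Prop :=
  ∀ B' ⊆ B, B'.Nonempty → Conn G B' → (∀ c ∈ C, ∃ b ∈ B', G.Adj c b) → B' = B

/-- `w` is the only neighbour of `c` in `B`. -/
def Priv (G : SimpleGraph V) (C B : Set V) (c w : V) : Prop :=
  c ∈ C ∧ w ∈ B ∧ ∀ b ∈ B, G.Adj c b ↔ b = w

lemma exists_priv {G : SimpleGraph V} {C B : Set V} (hm : MinDom G C B)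
    (hd : ∀ c ∈ C, ∃ b ∈ B, G.Adj c b) {v : V} (hv : v ∈ B) (hc : Conn G (B \ {v}))
    (hne : ∃ b ∈ B, b ≠ v) : ∃ c, Priv G C B c v := by
  by_contra hcon
  have : B \ {v} = B := by
    apply hm _ Set.sdiff_subset _ hc
    · intro c hcC
      by_contra h
      push Not at h
      have h' : ∀ b ∈ B, G.Adj c b → b = v := by
        intro b hb hcb
        by_contra hbv
        exact h b ⟨hb, hbv⟩ hcb
      obtain ⟨b, hb, hcb⟩ := hd c hcC
      have hbv := h' b hb hcb
      subst hbv
      exact hcon ⟨c, hcC, hb, fun b' hb' => ⟨h' b' hb', fun e => e ▸ hcb⟩⟩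
    · obtain ⟨b, hb, hbv⟩ := hne
      exact ⟨b, hb, hbv⟩
  have h2 : v ∈ B \ {v} := by rw [this]; exact hv
  exact h2.2 rfl

lemma alpha {G : SimpleGraph V} {A B C : Set V} (S : Setup G A B C) (hm : MinDom G C B)
    {n : ℕ} {p : ℕ → V} (hp : SP G B n p) {z wx wy wz : V}
    (hx : Priv G C B (p 0) wx) (hy : Priv G C B (p n) wy) (hz : Priv G C B z wz)
    (hxz : wx ≠ wz) (hyz : wy ≠ wz) (hwz : ∀ i ≤ n, wz ≠ p i) (hN : NP G B (p 0) (p n) z) :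
    False := by
  have hIP := hp.1
  have hn := hp.2.1
  have hpmem := hp.2.2.1
  have hcase : ∀ i ≤ n, i = 0 ∨ i = n ∨ (0 < i ∧ i < n) := by intro i hi; omega
  have hp1 : p 1 = wx := (hx.2.2 _ (hpmem 1 (by omega) (by omega))).1
    ((hIP.2 0 (by omega) 1 (by omega)).2 (by omega))
  have hpn : p (n-1) = wy := (hy.2.2 _ (hpmem (n-1) (by omega) (by omega))).1
    ((hIP.2 n (by omega) (n-1) (by omega)).2 (by omega))
  have hzp : ∀ i ≤ n, z ≠ p i := by
    intro i hi e
    rcases hcase i hi with rfl | rfl | ⟨h1, h2⟩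
    · rw [e] at hz
      exact hxz ((hz.2.2 _ hx.2.1).1 ((hx.2.2 _ hx.2.1).2 rfl))
    · rw [e] at hz
      exact hyz ((hz.2.2 _ hy.2.1).1 ((hy.2.2 _ hy.2.1).2 rfl))
    · exact S.dBC _ (hpmem i h1 h2) (e ▸ hz.1)
  have hzadj : ∀ i ≤ n, ¬ G.Adj z (p i) := by
    intro i hi e
    rcases hcase i hi with rfl | rfl | ⟨h1, h2⟩
    · exact S.ind _ hz.1 _ hx.1 e
    · exact S.ind _ hz.1 _ hy.1 e
    · exact hwz i hi ((hz.2.2 _ (hpmem i h1 h2)).1 e).symm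
  obtain ⟨q, hqX, hqp, -, hcore⟩ := attach S.cB hIP hn hpmem (z := z) (S.domB z hz.1) hzp
  have hqB : q ∈ B := by
    rcases hqX with h | rfl
    · exact h
    · exfalso
      rcases hcore with ⟨-, i, j, h1, h2, h3, -⟩ | ⟨i, L, h1, h2, -⟩ | ⟨i, L, h1, h2, -⟩
      · exact hzadj i (by omega) h3
      · exact hzadj i (by omega) h2
      · exact hzadj i h1 h2
  have hqint : ∀ i ≤ n, G.Adj q (p i) → 0 < i ∧ i < n := by
    intro i hi h
    rcases hcase i hi with rfl | rfl | h'
    · exact absurd (((hx.2.2 q hqB).1 h.symm).trans hp1.symm) (hqp 1 (by omega))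
    · exact absurd (((hy.2.2 q hqB).1 h.symm).trans hpn.symm) (hqp (i-1) (by omega))
    · exact h'
  rcases hcore with ⟨⟨L, hL⟩, i, j, h1, h2, h3, h4⟩ | ⟨i, L, h1, h2, h3, -, hL⟩ |
      ⟨i, L, h1, h2, h3, hL⟩
  · have hqw : q = wz := (hz.2.2 q hqB).1 (hN.1 q hqB L hL)
    subst hqw
    have hj := hp.short hqB (i := i) (j := j) h2 h3 (by omega) h4
    obtain rfl : j = i + 2 := by omega
    have hi0 := (hqint i (by omega) h3).1
    have hin := (hqint (i+2) (by omega) h4).2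
    have honly : ∀ l ≤ n, G.Adj q (p l) → l = i ∨ l = i + 1 ∨ l = i + 2 := by
      intro l hl h
      have := hp.short hqB (i := l) (j := i+2) h2 h hl h4
      have := hp.short hqB (i := i) (j := l) hl h3 (by omega) h
      omega
    by_cases hk : G.Adj q (p (i+1))
    · -- triangle case
      have hpi : p i ∈ B := hpmem i hi0 (by omega)
      have hpk : p (i+1) ∈ B := hpmem (i+1) (by omega) (by omega)
      obtain ⟨S', hS1, hS2, hS3, hS4⟩ := exists_comp (G := G) (Y := B \ {p (i+1)}) (u := p i)
        ⟨hpi, fun e => by have := hIP.1 i (by omega) (i+1) (by omega) e; omega⟩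
      have hSB : S' ⊆ B := fun v hv => (hS1 hv).1
      have hkS : p (i+1) ∉ S' := fun h => (hS1 h).2 rfl
      have hqS : q ∈ S' := hS4 _ hS2 q ⟨hqB, fun e => hqp (i+1) (by omega) e⟩ h3.symm
      have hseg : ∀ d, d < i → p (i - d) ∈ S' := by
        intro d
        induction d with
        | zero => intro _; exact hS2
        | succ d ih =>
          intro hd
          refine hS4 _ (ih (by omega)) _ ⟨hpmem _ (by omega) (by omega), fun e => ?_⟩
            ((hIP.2 _ (by omega) _ (by omega)).2 (by omega))
          have := hIP.1 (i - (d+1)) (by omega) (i+1) (by omega) e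
          omega
      have hseg' : ∀ l, 0 < l → l ≤ i → p l ∈ S' := by
        intro l hl hl'
        have := hseg (i - l) (by omega)
        rwa [show i - (i - l) = l by omega] at this
      -- the rest
      have hKedge : ∀ v ∈ B, v ∉ S' → v ≠ p (i+1) → ∀ s ∈ S', ¬ G.Adj v s :=
        fun v hv hvS hvk s hs h => hvS (hS4 s hs v ⟨hv, hvk⟩ h.symm)
      have hKc : Conn G (B \ S') := by
        apply conn_of_center (p (i+1))
        intro v hv
        obtain ⟨w, hw⟩ := S.cB v hv.1 _ hpk
        suffices h : ∀ (v u : V) (w : G.Walk v u), u = p (i+1) → (∀ x ∈ w.support, x ∈ B) →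
            v ∉ S' → ∃ w' : G.Walk v (p (i+1)), ∀ x ∈ w'.support, x ∈ B \ S' by
          obtain ⟨w', hw'⟩ := h v _ w rfl hw hv.2
          exact ⟨w'.reverse, fun x hx => hw' x (by simpa using hx)⟩
        clear hv hw w v
        intro v u w
        induction w with
        | nil =>
          rintro rfl hB hS
          exact ⟨Walk.nil, fun x hx => by simp at hx; subst hx; exact ⟨hpk, hS⟩⟩
        | @cons v v' u h w ih =>
          intro hu hB hS
          by_cases hvk : v = p (i+1)
          · subst hvk
            exact ⟨Walk.nil, fun x hx => by simp at hx; subst hx; exact ⟨hpk, hS⟩⟩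
          · have hvB : v ∈ B := hB v (by simp)
            have hv'B : v' ∈ B := hB v' (by simp)
            obtain ⟨w', hw'⟩ := ih hu (fun x hx => hB x (by simp [hx]))
              (fun h' => hKedge v hvB hS hvk v' h' h)
            refine ⟨Walk.cons h w', fun x hx => ?_⟩
            rw [Walk.support_cons, List.mem_cons] at hx
            rcases hx with rfl | hx
            · exact ⟨hvB, hS⟩
            · exact hw' x hx
      obtain ⟨w5, hw5, hw5S, hw5c⟩ := exists_noncut S.cB hSB hS3 ⟨_, hS2⟩ ⟨_, hpk, hkS⟩
      obtain ⟨c5, hc5⟩ := exists_priv hm S.domB hw5 hw5c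
        ⟨p i, hpi, fun e => hw5S (e ▸ hS2)⟩
      have hwxS : wx ∈ S' := hp1 ▸ hseg' 1 (by omega) (by omega)
      have hc5x : c5 ≠ p 0 := by
        rintro rfl
        exact hw5S (((hx.2.2 _ hw5).1 ((hc5.2.2 _ hw5).2 rfl)) ▸ hwxS)
      have hc5z : c5 ≠ z := by
        rintro rfl
        exact hw5S (((hz.2.2 _ hw5).1 ((hc5.2.2 _ hw5).2 rfl)) ▸ hqS)
      have hc5S : ∀ s ∈ S', ¬ G.Adj c5 s := fun s hs h =>
        hw5S ((hc5.2.2 s (hSB hs)).1 h ▸ hs)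
      have htri : IsTri G B ![p 0, z, c5] ![p i, q, p (i+1)]
          ![{w | ∃ k, 0 ≤ k ∧ k ≤ i ∧ w = p k}, {z, q}, insert c5 (B \ S')] := by
        have hzq : G.Adj z q := (hz.2.2 q hqB).2 rfl
        apply tri_mk
        · refine ⟨⟨i, by omega, le_rfl, rfl⟩, ⟨0, le_rfl, by omega, rfl⟩,
            conn_seg hIP (by omega), ?_⟩
          rintro w ⟨k, -, hk, rfl⟩
          rcases Nat.eq_zero_or_pos k with rfl | h0
          · exact Or.inr rfl
          · exact Or.inl (hpmem k h0 (by omega))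
        · refine ⟨Or.inr rfl, Or.inl rfl, conn_insert (conn_singleton G q) rfl hzq, ?_⟩
          rintro w (rfl | rfl)
          · exact Or.inr rfl
          · exact Or.inl hqB
        · refine ⟨Or.inr ⟨hpk, hkS⟩, Or.inl rfl,
            conn_insert hKc ⟨hw5, hw5S⟩ ((hc5.2.2 _ hw5).2 rfl), ?_⟩
          rintro w (rfl | hw)
          · exact Or.inr rfl
          · exact Or.inl hw.1
        · exact h3.symm
        · exact (hIP.2 i (by omega) (i+1) (by omega)).2 (by omega)
        · exact hk
        · rintro w ⟨k, -, hk', rfl⟩ y (rfl | rfl)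
          · exact ⟨(hzp k (by omega)).symm, fun e => absurd e.symm (hzadj k (by omega))⟩
          · refine ⟨(hqp k (by omega)).symm, fun e => ?_⟩
            have := honly k (by omega) e.symm
            obtain rfl : k = i := by omega
            exact ⟨rfl, rfl⟩
        · rintro w ⟨k, -, hk', rfl⟩ y (rfl | ⟨hyB, hyS⟩)
          · rcases Nat.eq_zero_or_pos k with rfl | h0
            · exact ⟨hc5x.symm, fun e => absurd e (S.ind _ hx.1 _ hc5.1)⟩
            · exact ⟨fun e => S.dBC _ (hpmem k h0 (by omega)) (e ▸ hc5.1),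
                fun e => absurd e.symm (hc5S _ (hseg' k h0 hk'))⟩
          · rcases Nat.eq_zero_or_pos k with rfl | h0
            · refine ⟨fun e => S.dBC y hyB (e ▸ hx.1), fun e => ?_⟩
              exact absurd hwxS ((hx.2.2 y hyB).1 e ▸ hyS)
            · refine ⟨fun e => hyS (e ▸ hseg' k h0 hk'), fun e => ?_⟩
              have hyk : y = p (i+1) := by
                by_contra h
                exact hKedge y hyB hyS h _ (hseg' k h0 hk') e.symm
              subst hyk
              have := (hIP.2 k (by omega) (i+1) (by omega)).1 e
              obtain rfl : k = i := by omega
              exact ⟨rfl, rfl⟩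
        · rintro w (rfl | rfl) y (rfl | ⟨hyB, hyS⟩)
          · exact ⟨hc5z.symm, fun e => absurd e (S.ind _ hz.1 _ hc5.1)⟩
          · refine ⟨fun e => S.dBC y hyB (e ▸ hz.1), fun e => ?_⟩
            exact absurd hqS ((hz.2.2 y hyB).1 e ▸ hyS)
          · exact ⟨fun e => S.dBC _ hqB (e ▸ hc5.1), fun e => absurd e.symm (hc5S _ hqS)⟩
          · refine ⟨fun e => hyS (e ▸ hqS), fun e => ?_⟩
            have hyk : y = p (i+1) := by
              by_contra h
              exact hKedge y hyB hyS h _ hqS e.symm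
            exact ⟨rfl, hyk⟩
      obtain ⟨L1, hL1⟩ := tri_rot htri
      obtain ⟨L2, hL2⟩ := tri_swap htri
      obtain ⟨L2, hL2⟩ := tri_rot hL2
      obtain ⟨L3, hL3⟩ := tri_swap hL1
      rcases exists_NP S hx.1 hz.1 hc5.1 (hzp 0 (by omega)).symm hc5x hc5z with h | h | h
      · exact h.2 _ hpi _ hqB _ hpk _ htri
      · exact h.2 _ hqB _ hpk _ hpi _ hL1
      · exact h.2 _ hpi _ hpk _ hqB _ hL2
    · -- theta
      apply S.nth
      obtain ⟨a0, ha0, hxa0⟩ := S.domA _ hx.1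
      obtain ⟨an, han, hyan⟩ := S.domA _ hy.1
      have hc2 : Conn G ((A ∪ {w | ∃ k, 0 ≤ k ∧ k ≤ i ∧ w = p k}) ∪
          {w | ∃ k, i + 2 ≤ k ∧ k ≤ n ∧ w = p k}) := by
        refine conn_union_adj (conn_union_adj S.cA (conn_seg hIP (by omega)) ha0
          ⟨0, le_rfl, by omega, rfl⟩ hxa0.symm) (conn_seg hIP le_rfl) (Or.inl han)
          ⟨n, by omega, le_rfl, rfl⟩ hyan.symm
      have e1 : G.Adj (p i) (p (i+1)) := (hIP.2 _ (by omega) _ (by omega)).2 (by omega)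
      have e2 : G.Adj (p (i+1)) (p (i+2)) := (hIP.2 _ (by omega) _ (by omega)).2 (by omega)
      have hpk : p (i+1) ∈ B := hpmem (i+1) (by omega) (by omega)
      have hM2 : ∀ x ∈ B, (∀ l ≤ n, l ≠ i + 1 → l ≠ i → l ≠ i + 2 → x ≠ p l ∧ ¬ G.Adj x (p l)) →
          ∀ y, y ∈ (A ∪ {w | ∃ k, 0 ≤ k ∧ k ≤ i ∧ w = p k}) ∪
          {w | ∃ k, i + 2 ≤ k ∧ k ≤ n ∧ w = p k} → y ≠ p i → y ≠ p (i+2) →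
          x ≠ y ∧ ¬ G.Adj x y := by
        rintro x hxB hx' y ((hy' | ⟨l, -, hl, rfl⟩) | ⟨l, hl', hl, rfl⟩) h5 h6
        · exact ⟨fun e => S.dAB y hy' (e ▸ hxB), fun e => S.anti y hy' x hxB e.symm⟩
        · exact hx' l (by omega) (by omega) (fun e => h5 (e ▸ rfl)) (by omega)
        · exact hx' l (by omega) (by omega) (by omega) (fun e => h6 (e ▸ rfl))
      have hMk := hM2 (p (i+1)) hpk (by
        intro l hl h5 h6 h7
        refine ⟨fun e => h5 (hIP.1 _ (by omega) _ hl e).symm, fun e => ?_⟩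
        have := (hIP.2 _ (by omega) _ hl).1 e
        omega)
      have hMq := hM2 q hqB (by
        intro l hl h5 h6 h7
        refine ⟨hqp l hl, fun e => ?_⟩
        have := honly l hl e
        omega)
      have hsym : ∀ x y : V, (x ≠ y ∧ ¬ G.Adj x y) → (y ≠ x ∧ ¬ G.Adj y x) :=
        fun x y h => ⟨h.1.symm, fun e => h.2 e.symm⟩
      refine theta_of_sets (u := p i) (v := p (i+2)) ![{p i, p (i+1), p (i+2)},
        {p i, q, p (i+2)}, ((A ∪ {w | ∃ k, 0 ≤ k ∧ k ≤ i ∧ w = p k}) ∪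
          {w | ∃ k, i + 2 ≤ k ∧ k ≤ n ∧ w = p k})] ?_ ?_ ?_ ?_ ?_ ?_
      · intro l; fin_cases l
        · exact conn_insert (conn_insert (conn_singleton G _) rfl e2) (Or.inl rfl) e1
        · exact conn_insert (conn_insert (conn_singleton G _) rfl h4) (Or.inl rfl) h3.symm
        · exact hc2
      · intro l; fin_cases l
        · simp
        · simp
        · exact Or.inl (Or.inr ⟨i, by omega, le_rfl, rfl⟩)
      · intro l; fin_cases l
        · simp
        · simp
        · exact Or.inr ⟨i+2, by omega, by omega, rfl⟩
      · intro e
        have := hIP.1 _ (by omega) _ (by omega) e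
        omega
      · intro e
        have := (hIP.2 _ (by omega) _ (by omega)).1 e
        omega
      · have h01 : p (i+1) ≠ q ∧ ¬ G.Adj (p (i+1)) q :=
          ⟨(hqp _ (by omega)).symm, fun e => hk e.symm⟩
        intro l m hlm w hw y hy' w1 w2 y1 y2
        fin_cases l <;> fin_cases m
        · exact absurd rfl hlm
        · rcases hw with rfl | rfl | rfl
          · exact absurd rfl w1
          · rcases hy' with rfl | rfl | rfl
            · exact absurd rfl y1
            · exact h01
            · exact absurd rfl y2
          · exact absurd rfl w2
        · rcases hw with rfl | rfl | rfl
          · exact absurd rfl w1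
          · exact hMk y hy' y1 y2
          · exact absurd rfl w2
        · rcases hw with rfl | rfl | rfl
          · exact absurd rfl w1
          · rcases hy' with rfl | rfl | rfl
            · exact absurd rfl y1
            · exact hsym _ _ h01
            · exact absurd rfl y2
          · exact absurd rfl w2
        · exact absurd rfl hlm
        · rcases hw with rfl | rfl | rfl
          · exact absurd rfl w1
          · exact hMq y hy' y1 y2
          · exact absurd rfl w2
        · rcases hy' with rfl | rfl | rfl
          · exact absurd rfl y1
          · exact hsym _ _ (hMk w hw w1 w2)
          · exact absurd rfl y2
        · rcases hy' with rfl | rfl | rfl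
          · exact absurd rfl y1
          · exact hsym _ _ (hMq w hw w1 w2)
          · exact absurd rfl y2
        · exact absurd rfl hlm
  · have hi1 := hqint i (by omega) h2
    have hi2 := hqint (i+1) (by omega) h3
    exact hN.2 _ (hpmem i hi1.1 hi1.2) _ (hpmem (i+1) hi2.1 hi2.2) _ hqB _ hL
  · have hi1 := hqint i (by omega) h2
    have hB := hpmem i hi1.1 hi1.2
    exact hzadj i h1 (hN.1 _ hB _ hL)

lemma SP.rev {G : SimpleGraph V} {X : Set V} {n : ℕ} {p : ℕ → V} (hp : SP G X n p) :
    SP G X n (fun i => p (n - i)) := by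
  refine ⟨hp.1.rev, hp.2.1, fun i h1 h2 => hp.2.2.1 _ (by omega) (by omega), ?_⟩
  intro q hq
  have := hp.2.2.2 ((q.copy (by simp) (by simp) : G.Walk (p n) (p 0)).reverse) (by
    intro w hw
    have hw' : w ∈ q.support := by simpa using hw
    have := hq w hw'
    simp only [Nat.sub_zero, Nat.sub_self] at this
    tauto)
  simpa using this

lemma IP.bound {G : SimpleGraph V} {n : ℕ} {p : ℕ → V} (hp : IP G n p) :
    n ≤ Fintype.card V := by
  have := Fintype.card_le_of_injective (fun i : Fin (n+1) => p i) (by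
    intro i j h
    exact Fin.ext (hp.1 i (by omega) j (by omega) h))
  simp at this
  omega

lemma struct_step {G : SimpleGraph V} {A B C : Set V} (S : Setup G A B C) (hm : MinDom G C B)
    {n : ℕ} {p : ℕ → V} (hp : SP G B n p) {w1 w2 z wz : V} (h1 : Priv G C B (p 0) w1)
    (h2 : Priv G C B (p n) w2) (hz : Priv G C B z wz) (h12 : w1 ≠ w2) (h1z : w1 ≠ wz)
    (h2z : w2 ≠ wz)
    (hmax : ∀ m q, SP G B m q → q 0 = p 0 → q m = z → m ≤ n)
    (hN : NP G B (p 0) z (p n)) : False := by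
  have hne : p 0 ≠ z := by
    rintro rfl
    exact h1z ((hz.2.2 _ h1.2.1).1 ((h1.2.2 _ h1.2.1).2 rfl))
  obtain ⟨m, q, hq, hq0, hqm⟩ := exists_SP S.cB hne (S.ind _ h1.1 _ hz.1) (S.domB _ h1.1)
    (S.domB _ hz.1)
  have hmn := hmax m q hq hq0 hqm
  rw [← hq0, ← hqm] at hN
  rw [← hqm] at hz
  have h1' := h1
  rw [← hq0] at h1'
  refine alpha S hm hq h1' hz h2 h12 h2z.symm ?_ hN
  intro i hi e
  have hcase : i = 0 ∨ i = m ∨ (0 < i ∧ i < m) := by omega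
  rcases hcase with rfl | rfl | ⟨h3, h4⟩
  · exact S.dBC _ h2.2.1 (e ▸ h1'.1)
  · exact S.dBC _ h2.2.1 (e ▸ hz.1)
  · obtain ⟨w, hl, hs⟩ := walk_sub hq.1 (i := 0) (j := i) (by omega) hi
    have hadj : G.Adj (q i) (p n) := by
      rw [← e]; exact ((h2.2.2 _ h2.2.1).2 rfl).symm
    have := hp.2.2.2 ((w.append (Walk.cons hadj Walk.nil)).copy hq0 rfl) (by
      intro x hx
      rw [Walk.support_copy, Walk.mem_support_append_iff] at hx
      rcases hx with hx | hx
      · obtain ⟨k, -, hk, rfl⟩ := hs x hx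
        rcases Nat.eq_zero_or_pos k with rfl | h0
        · exact Or.inl hq0
        · exact Or.inr (Or.inr (hq.2.2.1 k h0 (by omega)))
      · simp at hx
        rcases hx with rfl | rfl
        · exact Or.inr (Or.inr (hq.2.2.1 i h3 h4))
        · exact Or.inr (Or.inl rfl))
    simp [hl] at this
    have hi' : i + 1 = m := by omega
    have hadj2 : G.Adj (q m) (q i) := (hq.1.2 m le_rfl i hi).2 (by omega)
    exact h2z (e.trans ((hz.2.2 _ (hq.2.2.1 i h3 h4)).1 hadj2))

lemma structure_path {G : SimpleGraph V} {A B C : Set V} (S : Setup G A B C)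
    (hm : MinDom G C B) (hC : ∃ x ∈ C, ∃ y ∈ C, x ≠ y) :
    ∃ n p, IP G n p ∧ 2 ≤ n ∧ p 0 ∈ C ∧ p n ∈ C ∧
      ∀ v, v ∈ B ↔ ∃ i, 0 < i ∧ i < n ∧ v = p i := by
  classical
  by_cases hB : ∃ b1 ∈ B, ∃ b2 ∈ B, b1 ≠ b2
  · obtain ⟨b1, hb1, b2, hb2, hbne⟩ := hB
    have hother : ∀ v, ∃ b ∈ B, b ≠ v := by
      intro v
      by_cases h : b1 = v
      · exact ⟨b2, hb2, fun e => hbne (h.trans e.symm)⟩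
      · exact ⟨b1, hb1, h⟩
    have hsing : ∀ v ∈ B, ∃ u ∈ B, u ≠ v ∧ Conn G (B \ {u}) := by
      intro v hv
      obtain ⟨u, h1, h2, h3⟩ := exists_noncut S.cB (S := {v}) (by simpa using hv)
        (conn_singleton G v) ⟨v, rfl⟩ (by obtain ⟨b, hb, h⟩ := hother v; exact ⟨b, hb, h⟩)
      exact ⟨u, h1, h2, h3⟩
    obtain ⟨v1, hv1, -, hv1c⟩ := hsing b1 hb1
    obtain ⟨v2, hv2, hv12, hv2c⟩ := hsing v1 hv1
    obtain ⟨c1, hc1⟩ := exists_priv hm S.domB hv1 hv1c (hother v1)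
    obtain ⟨c2, hc2⟩ := exists_priv hm S.domB hv2 hv2c (hother v2)
    let Q : ℕ → Prop := fun n => ∃ p w1 w2, SP G B n p ∧ Priv G C B (p 0) w1 ∧
      Priv G C B (p n) w2 ∧ w1 ≠ w2
    have hpriv : ∀ x y wx wy, Priv G C B x wx → Priv G C B y wy → wx ≠ wy → x ≠ y := by
      rintro x y wx wy hx hy hne rfl
      exact hne ((hy.2.2 _ hx.2.1).1 ((hx.2.2 _ hx.2.1).2 rfl))
    have hex : ∃ n, n ≤ Fintype.card V ∧ Q n := by
      obtain ⟨n, p, hp, h0, hn⟩ := exists_SP S.cB (hpriv _ _ _ _ hc1 hc2 hv12.symm)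
        (S.ind _ hc1.1 _ hc2.1) (S.domB _ hc1.1) (S.domB _ hc2.1)
      exact ⟨n, hp.1.bound, p, v1, v2, hp, h0 ▸ hc1, hn ▸ hc2, hv12.symm⟩
    obtain ⟨n0, hn0, hQ0⟩ := hex
    obtain ⟨p, w1, w2, hp, h1, h2, h12⟩ := Nat.findGreatest_spec (P := Q) hn0 hQ0
    have hmax : ∀ m, Q m → m ≤ Nat.findGreatest Q (Fintype.card V) := by
      intro m hQ
      obtain ⟨q, _, _, hq, _⟩ := id hQ
      exact Nat.le_findGreatest hq.1.bound hQ
    generalize Nat.findGreatest Q (Fintype.card V) = n at hp h2 hmax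
    have hn := hp.2.1
    refine ⟨n, p, hp.1, hp.2.1, h1.1, h2.1, fun v => ⟨fun hv => ?_, ?_⟩⟩
    · by_contra hcon
      push Not at hcon
      obtain ⟨wz, hwz, hwzS, hwzc⟩ := exists_noncut S.cB
        (S := {w | ∃ k, 1 ≤ k ∧ k ≤ n - 1 ∧ w = p k})
        (by rintro w ⟨k, h3, h4, rfl⟩; exact hp.2.2.1 k (by omega) (by omega))
        (conn_seg hp.1 (by omega)) ⟨p 1, 1, le_rfl, by omega, rfl⟩
        ⟨v, hv, by rintro ⟨k, h3, h4, rfl⟩; exact hcon k (by omega) (by omega) rfl⟩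
      obtain ⟨z, hz⟩ := exists_priv hm S.domB hwz hwzc (hother wz)
      have hp1 : p 1 = w1 := (h1.2.2 _ (hp.2.2.1 1 (by omega) (by omega))).1
        ((hp.1.2 0 (by omega) 1 (by omega)).2 (by omega))
      have hpn : p (n-1) = w2 := (h2.2.2 _ (hp.2.2.1 (n-1) (by omega) (by omega))).1
        ((hp.1.2 n (by omega) (n-1) (by omega)).2 (by omega))
      have h1z : w1 ≠ wz := by
        rintro rfl
        exact hwzS ⟨1, le_rfl, by omega, hp1.symm⟩
      have h2z : w2 ≠ wz := by
        rintro rfl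
        exact hwzS ⟨n-1, by omega, by omega, hpn.symm⟩
      rcases exists_NP S h1.1 h2.1 hz.1 (hpriv _ _ _ _ h1 h2 h12)
        (hpriv _ _ _ _ hz h1 h1z.symm) (hpriv _ _ _ _ hz h2 h2z.symm) with h | h | h
      · refine alpha S hm hp h1 h2 hz h1z h2z ?_ h
        intro i hi e
        have hcase : i = 0 ∨ i = n ∨ (0 < i ∧ i < n) := by omega
        rcases hcase with rfl | rfl | ⟨h3, h4⟩
        · exact S.dBC _ hwz (e ▸ h1.1)
        · exact S.dBC _ hwz (e ▸ h2.1)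
        · exact hwzS ⟨i, by omega, by omega, e⟩
      · have hr := hp.rev
        refine struct_step S hm hr (w1 := w2) (w2 := w1) (z := z) (wz := wz)
          (by simpa using h2) (by simpa using h1) hz h12.symm h2z h1z ?_ (by simpa using h)
        intro m q hq hq0 hqm
        refine hmax m ⟨q, w2, wz, hq, ?_, hqm ▸ hz, h2z⟩
        rw [hq0]; simpa using h2
      · refine struct_step S hm hp h1 h2 hz h12 h1z h2z ?_ h
        intro m q hq hq0 hqm
        exact hmax m ⟨q, w1, wz, hq, hq0 ▸ h1, hqm ▸ hz, h1z⟩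
    · rintro ⟨i, h3, h4, rfl⟩
      exact hp.2.2.1 i h3 h4
  · push Not at hB
    obtain ⟨x, hx, y, hy, hxy⟩ := hC
    obtain ⟨n, p, hp, h0, hn⟩ := exists_SP S.cB hxy (S.ind _ hx _ hy) (S.domB _ hx)
      (S.domB _ hy)
    have := hp.2.1
    refine ⟨n, p, hp.1, hp.2.1, h0 ▸ hx, hn ▸ hy, fun v => ⟨fun hv => ?_, ?_⟩⟩
    · exact ⟨1, by omega, by omega, hB v hv _ (hp.2.2.1 1 (by omega) (by omega))⟩
    · rintro ⟨i, h3, h4, rfl⟩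
      exact hp.2.2.1 i h3 h4

/-- `X` is the vertex set of a path with distinct ends `l`, `r`, and any two vertices of `C`
whose private neighbours are `l` and `r` extend it to an induced path. -/
def PE (G : SimpleGraph V) (C X : Set V) (l r : V) : Prop :=
  l ≠ r ∧ ∀ a b, Priv G C X a l → Priv G C X b r → ∃ n p, IP G n p ∧ 3 ≤ n ∧ p 0 = a ∧ p 1 = l ∧
    p (n-1) = r ∧ p n = b ∧ ∀ v, v ∈ X ↔ ∃ i, 0 < i ∧ i < n ∧ v = p i

lemma PE.symm {G : SimpleGraph V} {C X : Set V} {l r : V} (h : PE G C X l r) :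
    PE G C X r l := by
  refine ⟨h.1.symm, fun a b ha hb => ?_⟩
  obtain ⟨n, p, hp, hn, h0, h1, h2, h3, h4⟩ := h.2 b a hb ha
  refine ⟨n, _, hp.rev, hn, h3, h2, ?_, ?_, ?_⟩
  · rw [← h1]; congr 1; omega
  · rw [← h0]; congr 1; omega
  · intro v
    rw [h4]
    constructor
    · rintro ⟨i, hi, hi', rfl⟩
      exact ⟨n - i, by omega, by omega, by congr 1; omega⟩
    · rintro ⟨i, hi, hi', rfl⟩
      exact ⟨n - i, by omega, by omega, rfl⟩

/-- two nonadjacent neighbours in `X` -/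
def NN (G : SimpleGraph V) (X : Set V) (z : V) : Prop :=
  ∃ x ∈ X, ∃ y ∈ X, x ≠ y ∧ ¬ G.Adj x y ∧ G.Adj z x ∧ G.Adj z y

lemma claw_swap23 {G : SimpleGraph V} {X : Set V} {a b z u : V} {L}
    (h : IsClaw G X ![a, b, z] u L) : ∃ L, IsClaw G X ![a, z, b] u L := by
  obtain ⟨L, h⟩ := claw_rot h
  obtain ⟨L, h⟩ := claw_swap h
  obtain ⟨L, h⟩ := claw_rot h
  exact claw_rot h

lemma tri_swap23 {G : SimpleGraph V} {X : Set V} {a b z s t r : V} {L}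
    (h : IsTri G X ![a, b, z] ![s, t, r] L) : ∃ L, IsTri G X ![a, z, b] ![s, r, t] L := by
  obtain ⟨L, h⟩ := tri_rot h
  obtain ⟨L, h⟩ := tri_swap h
  obtain ⟨L, h⟩ := tri_rot h
  exact tri_rot h

lemma fullT {G : SimpleGraph V} {A B C : Set V} (S : Setup G A B C) {l r a b z : V}
    (hPE : PE G C A l r) (ha : Priv G C A a l) (hb : Priv G C A b r) (hz : z ∈ C)
    (hzl : ¬ Priv G C A z l) (hzr : ¬ Priv G C A z r) :
    (NN G A z ∧ ∃ L, IsClaw G A ![a, b, z] z L) ∨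
    (∃ s ∈ A, ∃ t ∈ A, ∃ L, IsTri G A ![a, b, z] ![s, t, z] L) ∨
    (∃ u ∈ A, ∃ L, G.Adj z u ∧ u ≠ l ∧ u ≠ r ∧ IsClaw G A ![a, b, z] u L) := by
  obtain ⟨n, p, hp, hn, h0, h1, h2, h3, h4⟩ := hPE.2 a b ha hb
  have hcase : ∀ i ≤ n, i = 0 ∨ i = n ∨ (0 < i ∧ i < n) := by intro i hi; omega
  have hpmem : ∀ i, 0 < i → i < n → p i ∈ A := fun i hi hi' => (h4 _).2 ⟨i, hi, hi', rfl⟩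
  have hzA : ∀ i ≤ n, G.Adj z (p i) → p i ∈ A := by
    intro i hi h
    rcases hcase i hi with rfl | rfl | ⟨h5, h6⟩
    · exact absurd h (S.ind _ hz _ (h0 ▸ ha.1))
    · exact absurd h (S.ind _ hz _ (h3 ▸ hb.1))
    · exact hpmem i h5 h6
  have hc := core hp hpmem (conn_singleton G z) (z := z) (q := z) rfl rfl
    (fun w hw => Or.inr hw) (by
      rintro w rfl i hi rfl
      rcases hcase i hi with rfl | rfl | ⟨h5, h6⟩
      · exact hzl (h0 ▸ ha)
      · exact hzr (h3 ▸ hb)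
      · exact S.dAC _ (hpmem i h5 h6) hz)
    (by
      obtain ⟨x, hx, hzx⟩ := S.domA z hz
      obtain ⟨i, hi, hi', rfl⟩ := (h4 x).1 hx
      exact ⟨i, by omega, hzx⟩)
    (by rintro w rfl h; exact absurd rfl h)
  rw [CoreOut, h0, h3] at hc
  rcases hc with ⟨hL, i, j, h5, h6, h7, h8⟩ | ⟨i, L, h5, h6, h7, -, hL⟩ | ⟨i, L, h5, h6, h7, hL⟩
  · refine Or.inl ⟨⟨p i, hzA i (by omega) h7, p j, hzA j h6 h8, ?_, ?_, h7, h8⟩, hL⟩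
    · intro e
      have := hp.1 i (by omega) j h6 e; omega
    · intro e
      have := (hp.2 i (by omega) j h6).1 e; omega
  · exact Or.inr (Or.inl ⟨p i, hzA i (by omega) h6, p (i+1), hzA (i+1) (by omega) h7, L, hL⟩)
  · have hpriv : Priv G C A z (p i) := by
      refine ⟨hz, hzA i h5 h6, fun x hx => ⟨fun h => ?_, fun h => h ▸ h6⟩⟩
      obtain ⟨j, hj, hj', rfl⟩ := (h4 x).1 hx
      rw [h7 j (by omega) h]
    refine Or.inr (Or.inr ⟨p i, hzA i h5 h6, L, h6, ?_, ?_, hL⟩)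
    · rintro rfl; exact hzl hpriv
    · rintro rfl; exact hzr hpriv

lemma lemmaZ {G : SimpleGraph V} {A B C : Set V} (S : Setup G A B C) {l r a b z : V}
    (hPE : PE G C A l r) (ha : Priv G C A a l) (hb : Priv G C A b r) (hz : z ∈ C)
    (hzl : ¬ Priv G C A z l) (hzr : ¬ Priv G C A z r) :
    (∀ v L, IsClaw G B ![a, b, z] v L → v = z ∨ (G.Adj v z ∧ NN G A z)) ∧
    (∀ s t q L, IsTri G B ![a, b, z] ![s, t, q] L → q = z) := by
  have hc : ∀ i, (![a, b, z] : Fin 3 → V) i ∈ C := by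
    intro i; fin_cases i
    · exact ha.1
    · exact hb.1
    · exact hz
  have hza : z ≠ a := fun e => hzl (e ▸ ha)
  have hzb : z ≠ b := fun e => hzr (e ▸ hb)
  have hclawA : ∀ v L, IsClaw G B ![a, b, z] v L → v ∉ A := by
    intro v L hL hv
    rcases hL.2.1 with h | ⟨i, h⟩
    · exact S.dAB v hv h
    · exact S.dAC v hv (h ▸ hc i)
  have htriA : ∀ s t q L, IsTri G B ![a, b, z] ![s, t, q] L →
      (s ∈ B ∨ s = a) ∧ (t ∈ B ∨ t = b) := by
    intro s t q L hL
    exact ⟨(hL.1 0).2.2.2 _ (hL.1 0).1, (hL.1 1).2.2.2 _ (hL.1 1).1⟩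
  have htriA' : ∀ s t q L, IsTri G B ![a, b, z] ![s, t, q] L → s ∉ A ∧ t ∉ A := by
    intro s t q L hL
    obtain ⟨h1, h2⟩ := htriA s t q L hL
    refine ⟨fun h => ?_, fun h => ?_⟩
    · rcases h1 with h' | rfl
      · exact S.dAB _ h h'
      · exact S.dAC _ h ha.1
    · rcases h2 with h' | rfl
      · exact S.dAB _ h h'
      · exact S.dAC _ h hb.1
  rcases fullT S hPE ha hb hz hzl hzr with ⟨hNN, M, hM⟩ | ⟨s', hs', t', ht', M, hM⟩ |
    ⟨u, hu, M, hzu, hul, hur, hM⟩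
  · refine ⟨fun v L hL => ?_, fun s t q L hL => ?_⟩
    · rcases compat_CC S hM hL with e | e
      · exact Or.inl e.symm
      · exact Or.inr ⟨e.symm, hNN⟩
    · obtain ⟨i, hi⟩ := compat_CT S hc hM hL
      obtain ⟨h1, h2⟩ := htriA s t q L hL
      fin_cases i
      · change z = s at hi
        subst hi
        rcases h1 with h | h
        · exact absurd hz (S.dBC _ h)
        · exact absurd h hza
      · change z = t at hi
        subst hi
        rcases h2 with h | h
        · exact absurd hz (S.dBC _ h)
        · exact absurd h hzb
      · exact hi.symm
  · refine ⟨fun v L hL => ?_, fun s t q L hL => ?_⟩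
    · obtain ⟨i, hi⟩ := compat_CT S.symm hc hL hM
      have := hclawA v L hL
      fin_cases i
      · exact absurd (show v ∈ A from (show v = s' from hi) ▸ hs') this
      · exact absurd (show v ∈ A from (show v = t' from hi) ▸ ht') this
      · exact Or.inl hi
    · obtain ⟨i, hi⟩ := compat_TT S hM hL
      obtain ⟨h1, h2⟩ := htriA' s t q L hL
      fin_cases i
      · exact absurd (show s ∈ A from (show s' = s from hi) ▸ hs') h1
      · exact absurd (show t ∈ A from (show t' = t from hi) ▸ ht') h2
      · exact hi.symm
  · refine ⟨fun v L hL => ?_, fun s t q L hL => ?_⟩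
    · have hvA := hclawA v L hL
      rcases compat_CC S hM hL with e | e
      · exact absurd hu (e ▸ hvA)
      · rcases hL.2.1 with h | ⟨i, h⟩
        · exact absurd e (S.anti u hu v h)
        · fin_cases i
          · exact absurd ((ha.2.2 u hu).1 ((show v = a from h) ▸ e.symm)) hul
          · exact absurd ((hb.2.2 u hu).1 ((show v = b from h) ▸ e.symm)) hur
          · exact Or.inl h
    · obtain ⟨i, hi⟩ := compat_CT S hc hM hL
      obtain ⟨h1, h2⟩ := htriA' s t q L hL
      fin_cases i
      · exact absurd (show s ∈ A from (show u = s from hi) ▸ hu) h1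
      · exact absurd (show t ∈ A from (show u = t from hi) ▸ hu) h2
      · have h3 : u = q := hi
        rcases (hL.1 2).2.2.2 _ (hL.1 2).1 with h | h
        · exact absurd (show q ∈ B from h) (h3 ▸ S.dAB u hu)
        · exact h

lemma fact1 {G : SimpleGraph V} {A B C : Set V} (S : Setup G A B C) {l r l' r' a b d : V}
    (hA : PE G C A l r) (hB : PE G C B l' r') (ha : Priv G C A a l) (ha' : Priv G C B a l')
    (hb : Priv G C A b r) (hd : Priv G C B d r') (hdl : ¬ Priv G C A d l)
    (hdr : ¬ Priv G C A d r) (hbl : ¬ Priv G C B b l') (hbr : ¬ Priv G C B b r') : False := by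
  obtain ⟨hz1, hz2⟩ := lemmaZ S hA ha hb hd.1 hdl hdr
  rcases fullT S.symm hB ha' hd hb.1 hbl hbr with ⟨-, M, hM⟩ | ⟨s', hs', t', ht', M, hM⟩ |
    ⟨u, hu, M, hzu, hul, hur, hM⟩
  · obtain ⟨M, hM⟩ := claw_swap23 hM
    rcases hz1 _ _ hM with rfl | ⟨h, -⟩
    · exact hbr hd
    · exact S.ind _ hb.1 _ hd.1 h
  · obtain ⟨M, hM⟩ := tri_swap23 hM
    have := hz2 _ _ _ _ hM
    exact S.dBC _ ht' (this ▸ hd.1)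
  · obtain ⟨M, hM⟩ := claw_swap23 hM
    rcases hz1 _ _ hM with rfl | ⟨h, -⟩
    · exact S.dBC _ hu hd.1
    · exact hur ((hd.2.2 u hu).1 h.symm)

lemma fact2 {G : SimpleGraph V} {A B C : Set V} (S : Setup G A B C) {l r l' r' b c d : V}
    (hA : PE G C A l r) (hB : PE G C B l' r') (hc : Priv G C A c l) (hc' : Priv G C B c l')
    (hd : Priv G C A d l) (hd' : Priv G C B d r') (hb : Priv G C A b r)
    (hbl : ¬ Priv G C B b l') (hbr : ¬ Priv G C B b r') : False := by
  have hcd : c ≠ d := by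
    rintro rfl
    exact hB.1 ((hd'.2.2 _ hc'.2.1).1 ((hc'.2.2 _ hc'.2.1).2 rfl))
  have hbc : b ≠ c := fun e => hbl (e ▸ hc')
  have hbd : b ≠ d := fun e => hbr (e ▸ hd')
  obtain ⟨hz1, -⟩ := lemmaZ S.symm hB hc' hd' hb.1 hbl hbr
  have hcl : IsClaw G A ![c, d, b] l ![{c, l}, {d, l}, insert b A] := by
    have leg : ∀ x y : V, x ≠ y → Priv G C A x l → y ∈ C → ∀ w ∈ ({x, l} : Set V),
        ∀ v ∈ insert y A, w ≠ l → v ≠ l → w ≠ v ∧ ¬ G.Adj w v := by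
      rintro x y hxy hx hy w (rfl | rfl) v (rfl | hv) h1 h2
      · exact ⟨hxy, S.ind _ hx.1 _ hy⟩
      · exact ⟨fun e => S.dAC v hv (e ▸ hx.1), fun e => h2 ((hx.2.2 v hv).1 e)⟩
      · exact absurd rfl h1
      · exact absurd rfl h1
    apply claw_mk
    · refine ⟨Or.inr rfl, Or.inl rfl, conn_insert (conn_singleton G l) rfl
        ((hc.2.2 _ hc.2.1).2 rfl), ?_⟩
      rintro w (rfl | rfl)
      · exact Or.inr (Or.inr rfl)
      · exact Or.inl rfl
    · refine ⟨Or.inr rfl, Or.inl rfl, conn_insert (conn_singleton G l) rfl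
        ((hd.2.2 _ hc.2.1).2 rfl), ?_⟩
      rintro w (rfl | rfl)
      · exact Or.inr (Or.inr rfl)
      · exact Or.inl rfl
    · refine ⟨Or.inr hc.2.1, Or.inl rfl, conn_insert S.cA hb.2.1
        ((hb.2.2 _ hb.2.1).2 rfl), ?_⟩
      rintro w (rfl | h)
      · exact Or.inr (Or.inr rfl)
      · exact Or.inr (Or.inl h)
    · exact Or.inl hc.2.1
    · intro w hw y hy h1 h2
      refine leg c d hcd hc hd.1 w hw y ?_ h1 h2
      rcases hy with h | h
      · exact Or.inl h
      · exact absurd h h2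
    · exact leg c b hbc.symm hc hb.1
    · exact leg d b hbd.symm hd hb.1
  rcases hz1 _ _ hcl with rfl | ⟨h, -⟩
  · exact S.dAC _ hc.2.1 hb.1
  · exact hA.1 ((hb.2.2 _ hc.2.1).1 h.symm)

/-- The configuration of the last case. -/
structure Cfg (G : SimpleGraph V) (A B C : Set V) (l r l' r' a₀ b₀ c₀ d₀ : V) : Prop where
  S : Setup G A B C
  PA : PE G C A l r
  PB : PE G C B l' r'
  a : Priv G C A a₀ l
  b : Priv G C A b₀ r
  c : Priv G C B c₀ l'
  d : Priv G C B d₀ r'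
  al : ¬ Priv G C B a₀ l'
  ar : ¬ Priv G C B a₀ r'
  bl : ¬ Priv G C B b₀ l'
  br : ¬ Priv G C B b₀ r'
  cl : ¬ Priv G C A c₀ l
  cr : ¬ Priv G C A c₀ r
  dl : ¬ Priv G C A d₀ l
  dr : ¬ Priv G C A d₀ r

section cfg
variable {G : SimpleGraph V} {A B C : Set V} {l r l' r' a b c d : V}

lemma Cfg.swapA (h : Cfg G A B C l r l' r' a b c d) : Cfg G A B C r l l' r' b a c d :=
  ⟨h.S, h.PA.symm, h.PB, h.b, h.a, h.c, h.d, h.bl, h.br, h.al, h.ar, h.cr, h.cl, h.dr, h.dl⟩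

lemma Cfg.swapB (h : Cfg G A B C l r l' r' a b c d) : Cfg G A B C l r r' l' a b d c :=
  ⟨h.S, h.PA, h.PB.symm, h.a, h.b, h.d, h.c, h.ar, h.al, h.br, h.bl, h.dl, h.dr, h.cl, h.cr⟩

lemma Cfg.side (h : Cfg G A B C l r l' r' a b c d) : Cfg G B A C l' r' l r c d a b :=
  ⟨h.S.symm, h.PB, h.PA, h.c, h.d, h.a, h.b, h.cl, h.cr, h.dl, h.dr, h.al, h.ar, h.bl, h.br⟩

lemma Cfg.stepi_aux (h : Cfg G A B C l r l' r' a b c d) {n : ℕ} {g : ℕ → V} (hg : IP G n g)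
    (hgc : g 0 = c) (hg1 : g 1 = l') (hgB : ∀ v, v ∈ B ↔ ∃ i, 0 < i ∧ i < n ∧ v = g i)
    {s t : ℕ} (hs : 0 < s) (ht : t < n) (hst : s ≤ t) (has : G.Adj a (g s)) (hbt : G.Adj b (g t))
    (hmin : ∀ i, 0 < i → i < t → ¬ G.Adj b (g i)) : G.Adj a l' ∧ NN G A c := by
  obtain ⟨hz1, hz2⟩ := lemmaZ h.S h.PA h.a h.b h.c.1 h.cl h.cr
  have hbc : b ≠ c := fun e => h.cr (e ▸ h.b)
  have hac : a ≠ c := fun e => h.cl (e ▸ h.a)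
  have hab : a ≠ b := by
    intro e
    have h1 := h.a
    rw [e] at h1
    exact h.PA.1 ((h.b.2.2 _ h1.2.1).1 ((h1.2.2 _ h1.2.1).2 rfl))
  have hgin : ∀ i, 0 < i → i < n → g i ∈ B := fun i h1 h2 => (hgB _).2 ⟨i, h1, h2, rfl⟩
  have hbg : ∀ i ≤ t, b ≠ g i := by
    intro i hi e
    rcases Nat.eq_zero_or_pos i with rfl | h0
    · exact hbc (e.trans hgc)
    · exact h.S.dBC _ (hgin i h0 (by omega)) (e ▸ h.b.1)
  have hag : ∀ i ≤ t, a ≠ g i := by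
    intro i hi e
    rcases Nat.eq_zero_or_pos i with rfl | h0
    · exact hac (e.trans hgc)
    · exact h.S.dBC _ (hgin i h0 (by omega)) (e ▸ h.a.1)
  have hbadj : ∀ i ≤ t, G.Adj b (g i) ↔ i = t := by
    intro i hi
    constructor
    · intro e
      rcases Nat.eq_zero_or_pos i with rfl | h0
      · exact absurd e (h.S.ind _ h.b.1 _ (hgc ▸ h.c.1))
      · by_contra hne
        exact hmin i h0 (by omega) e
    · rintro rfl; exact hbt
  obtain ⟨p, hpd⟩ : ∃ p : ℕ → V, p = fun i => if i ≤ t then g i else b := ⟨_, rfl⟩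
  have hp1 : ∀ i ≤ t, p i = g i := by intro i hi; simp [hpd, hi]
  have hp2 : p (t+1) = b := by simp [hpd]
  have hcase : ∀ i ≤ t + 1, i ≤ t ∨ i = t + 1 := by intro i hi; omega
  have hp : IP G (t+1) p := by
    refine ⟨fun i hi j hj e => ?_, fun i hi j hj => ?_⟩
    · rcases hcase i hi with hi' | rfl <;> rcases hcase j hj with hj' | rfl
      · rw [hp1 i hi', hp1 j hj'] at e
        exact hg.1 i (by omega) j (by omega) e
      · rw [hp1 i hi', hp2] at e
        exact absurd e.symm (hbg i hi')
      · rw [hp1 j hj', hp2] at e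
        exact absurd e (hbg j hj')
      · rfl
    · rcases hcase i hi with hi' | rfl <;> rcases hcase j hj with hj' | rfl
      · rw [hp1 i hi', hp1 j hj']
        exact hg.2 i (by omega) j (by omega)
      · rw [hp1 i hi', hp2, G.adj_comm, hbadj i hi']
        omega
      · rw [hp1 j hj', hp2, hbadj j hj']
        omega
      · rw [hp2]; simp
  have hc := core hp (X := B) (fun i h1 h2 => by
      rw [hp1 i (by omega)]; exact hgin i h1 (by omega))
    (conn_singleton G a) (z := a) (q := a) rfl rfl
    (fun w hw => Or.inr hw) (by
      rintro w rfl i hi e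
      rcases hcase i hi with hi' | rfl
      · exact hag i hi' (e.trans (hp1 i hi'))
      · exact hab (e.trans hp2))
    ⟨s, by omega, by rw [hp1 s hst]; exact has⟩
    (by rintro w rfl h; exact absurd rfl h)
  have hp0 : p 0 = c := (hp1 0 (by omega)).trans hgc
  rw [CoreOut, hp0, hp2] at hc
  rcases hc with ⟨⟨L, hL⟩, -⟩ | ⟨i, L, h5, h6, h7, -, hL⟩ | ⟨i, L, h5, h6, h7, hL⟩
  · exfalso
    obtain ⟨L, hL⟩ := claw_rot hL
    obtain ⟨L, hL⟩ := claw_swap hL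
    rcases hz1 _ _ hL with e | ⟨e, -⟩
    · exact hac e
    · exact h.S.ind _ h.a.1 _ h.c.1 e
  · exfalso
    obtain ⟨L, hL⟩ := tri_rot hL
    obtain ⟨L, hL⟩ := tri_swap hL
    have := hz2 _ _ _ _ hL
    rw [this] at h6
    exact h.S.ind _ h.a.1 _ h.c.1 h6
  · obtain ⟨L, hL⟩ := claw_rot hL
    obtain ⟨L, hL⟩ := claw_swap hL
    rcases hz1 _ _ hL with e | ⟨e, hNN⟩
    · rw [e] at h6
      exact absurd h6 (h.S.ind _ h.a.1 _ h.c.1)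
    · refine ⟨?_, hNN⟩
      rw [← hp0] at e
      have hi := (hp.2 i h5 0 (by omega)).1 e
      obtain rfl : i = 1 := by omega
      rw [hp1 1 (by omega), hg1] at h6
      exact h6

lemma Cfg.stepi (h : Cfg G A B C l r l' r' a b c d) : (G.Adj a l' ∨ G.Adj b l') ∧ NN G A c := by
  classical
  obtain ⟨n, g, hg, hn, h0, h1, h2, h3, h4⟩ := h.PB.2 c d h.c h.d
  have hf : ∀ x ∈ C, ∃ s, 0 < s ∧ s < n ∧ G.Adj x (g s) ∧
      ∀ i, 0 < i → i < s → ¬ G.Adj x (g i) := by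
    intro x hx
    obtain ⟨y, hy, hxy⟩ := h.S.domB x hx
    obtain ⟨i, hi, hi', rfl⟩ := (h4 y).1 hy
    have hex : ∃ i, 0 < i ∧ i < n ∧ G.Adj x (g i) := ⟨i, hi, hi', hxy⟩
    obtain ⟨q1, q2, q3⟩ := Nat.find_spec hex
    refine ⟨Nat.find hex, q1, q2, q3, fun j hj hj' hadj => ?_⟩
    exact Nat.find_min hex hj' ⟨hj, by omega, hadj⟩
  obtain ⟨s, s1, s2, s3, s4⟩ := hf a h.a.1
  obtain ⟨t, t1, t2, t3, t4⟩ := hf b h.b.1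
  rcases le_total s t with hst | hst
  · have := h.stepi_aux hg h0 h1 h4 s1 t2 hst s3 t3 t4
    exact ⟨Or.inl this.1, this.2⟩
  · have := h.swapA.stepi_aux hg h0 h1 h4 t1 s2 hst t3 s3 s4
    exact ⟨Or.inr this.1, this.2⟩

lemma Cfg.ab (h : Cfg G A B C l r l' r' a b c d) : a ≠ b := by
  intro e
  have h1 := h.a
  rw [e] at h1
  exact h.PA.1 ((h.b.2.2 _ h1.2.1).1 ((h1.2.2 _ h1.2.1).2 rfl))

lemma Cfg.stepii (h : Cfg G A B C l r l' r' a b c d) (hal : G.Adj a l') : ¬ G.Adj a r' := by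
  intro har
  obtain ⟨n, g, hg, hn, h0, h1, h2, h3, h4⟩ := h.PB.2 c d h.c h.d
  obtain ⟨k1, k2, q1, q2, q3, q4, q5⟩ : ∃ k1 k2, 0 < k1 ∧ k1 + 2 ≤ k2 ∧ k2 < n ∧
      G.Adj b (g k1) ∧ G.Adj b (g k2) := by
    obtain ⟨x, hx, y, hy, hxy, hna, hbx, hby⟩ := h.side.swapB.stepi.2
    obtain ⟨i, hi, hi', rfl⟩ := (h4 x).1 hx
    obtain ⟨j, hj, hj', rfl⟩ := (h4 y).1 hy
    have hij : i ≠ j := fun e => hxy (e ▸ rfl)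
    rw [hg.2 i (by omega) j (by omega)] at hna
    rcases le_total i j with h' | h'
    · exact ⟨i, j, hi, by omega, hj', hbx, hby⟩
    · exact ⟨j, i, hj, by omega, hi', hby, hbx⟩
  have hgin : ∀ i, 0 < i → i < n → g i ∈ B := fun i h1 h2 => (h4 _).2 ⟨i, h1, h2, rfl⟩
  have hab := h.ab
  apply h.S.nth
  have hsym : ∀ x y : V, (x ≠ y ∧ ¬ G.Adj x y) → (y ≠ x ∧ ¬ G.Adj y x) :=
    fun x y h => ⟨h.1.symm, fun e => h.2 e.symm⟩
  have hBA : ∀ x ∈ B, ∀ y ∈ A, x ≠ y ∧ ¬ G.Adj x y := fun x hx y hy =>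
    ⟨fun e => h.S.dAB y hy (e ▸ hx), fun e => h.S.anti y hy x hx e.symm⟩
  have hc0 : Conn G (insert a (insert b {w | ∃ k, 1 ≤ k ∧ k ≤ k1 ∧ w = g k})) :=
    conn_insert (conn_insert (conn_seg hg (by omega)) ⟨k1, by omega, le_rfl, rfl⟩ q4)
      (Or.inr ⟨1, le_rfl, by omega, rfl⟩) (h1 ▸ hal)
  have hc1 : Conn G (insert a (insert b {w | ∃ k, k2 ≤ k ∧ k ≤ n - 1 ∧ w = g k})) :=
    conn_insert (conn_insert (conn_seg hg (by omega)) ⟨k2, by omega, by omega, rfl⟩ q5)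
      (Or.inr ⟨n-1, by omega, by omega, rfl⟩) (h2 ▸ har)
  have hc2 : Conn G (insert a (insert b A)) :=
    conn_insert (conn_insert h.S.cA h.b.2.1 ((h.b.2.2 _ h.b.2.1).2 rfl))
      (Or.inr h.a.2.1) ((h.a.2.2 _ h.a.2.1).2 rfl)
  have m01 : ∀ w ∈ {w | ∃ k, 1 ≤ k ∧ k ≤ k1 ∧ w = g k},
      ∀ y ∈ {w | ∃ k, k2 ≤ k ∧ k ≤ n - 1 ∧ w = g k}, w ≠ y ∧ ¬ G.Adj w y := by
    rintro w ⟨k, e1, e2, rfl⟩ y ⟨j, e3, e4, rfl⟩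
    refine ⟨fun e => ?_, fun e => ?_⟩
    · have := hg.1 _ (by omega) _ (by omega) e
      omega
    · have := (hg.2 _ (by omega) _ (by omega)).1 e
      omega
  have m02 : ∀ w ∈ {w | ∃ k, 1 ≤ k ∧ k ≤ k1 ∧ w = g k}, ∀ y ∈ A, w ≠ y ∧ ¬ G.Adj w y := by
    rintro w ⟨k, e1, e2, rfl⟩ y hy
    exact hBA _ (hgin k (by omega) (by omega)) y hy
  have m12 : ∀ w ∈ {w | ∃ k, k2 ≤ k ∧ k ≤ n - 1 ∧ w = g k}, ∀ y ∈ A, w ≠ y ∧ ¬ G.Adj w y := by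
    rintro w ⟨k, e1, e2, rfl⟩ y hy
    exact hBA _ (hgin k (by omega) (by omega)) y hy
  have red : ∀ X Y : Set V, (∀ w ∈ X, ∀ y ∈ Y, w ≠ y ∧ ¬ G.Adj w y) →
      ∀ w ∈ insert a (insert b X), ∀ y ∈ insert a (insert b Y), w ≠ a → w ≠ b → y ≠ a → y ≠ b →
      w ≠ y ∧ ¬ G.Adj w y := by
    rintro X Y hXY w (e | e | hw) y (e' | e' | hy) w1 w2 y1 y2
    all_goals first | exact absurd e w1 | exact absurd e w2 | exact absurd e' y1 |
      exact absurd e' y2 | exact hXY w hw y hy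
  refine theta_of_sets (u := a) (v := b)
    ![insert a (insert b {w | ∃ k, 1 ≤ k ∧ k ≤ k1 ∧ w = g k}),
      insert a (insert b {w | ∃ k, k2 ≤ k ∧ k ≤ n - 1 ∧ w = g k}),
      insert a (insert b A)] ?_ ?_ ?_ hab (h.S.ind _ h.a.1 _ h.b.1) ?_
  · intro i; fin_cases i
    · exact hc0
    · exact hc1
    · exact hc2
  · intro i; fin_cases i <;> exact Or.inl rfl
  · intro i; fin_cases i <;> exact Or.inr (Or.inl rfl)
  · have sw : ∀ X Y : Set V, (∀ w ∈ X, ∀ y ∈ Y, w ≠ y ∧ ¬ G.Adj w y) →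
      (∀ w ∈ Y, ∀ y ∈ X, w ≠ y ∧ ¬ G.Adj w y) := fun X Y hXY w hw y hy => hsym _ _ (hXY y hy w hw)
    intro i j hij
    fin_cases i <;> fin_cases j
    · exact absurd rfl hij
    · exact red _ _ m01
    · exact red _ _ m02
    · exact red _ _ (sw _ _ m01)
    · exact absurd rfl hij
    · exact red _ _ m12
    · exact red _ _ (sw _ _ m02)
    · exact red _ _ (sw _ _ m12)
    · exact absurd rfl hij

lemma Cfg.stepiii (h : Cfg G A B C l r l' r' a b c d) (hal : G.Adj a l') : False := by
  classical
  have har := h.stepii hal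
  have hbr : G.Adj b r' := (h.swapB.stepi.1).resolve_left har
  obtain ⟨n, g, hg, hn, h0, h1, h2, h3, h4⟩ := h.PB.2 c d h.c h.d
  obtain ⟨t, q1, q2, q4⟩ : ∃ t, 0 < t ∧ t + 2 < n ∧ G.Adj b (g t) := by
    obtain ⟨x, hx, y, hy, hxy, hna, hbx, hby⟩ := h.side.swapB.stepi.2
    obtain ⟨i, hi, hi', rfl⟩ := (h4 x).1 hx
    obtain ⟨j, hj, hj', rfl⟩ := (h4 y).1 hy
    have hij : i ≠ j := fun e => hxy (e ▸ rfl)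
    rw [hg.2 i (by omega) j (by omega)] at hna
    rcases le_total i j with h' | h'
    · exact ⟨i, hi, by omega, hbx⟩
    · exact ⟨j, hj, by omega, hby⟩
  have hgin : ∀ i, 0 < i → i < n → g i ∈ B := fun i h1 h2 => (h4 _).2 ⟨i, h1, h2, rfl⟩
  obtain ⟨m, p, hp, hp0, hpm⟩ := exists_SP (conn_seg hg (i := 1) (j := t) (by omega)) h.ab
    (h.S.ind _ h.a.1 _ h.b.1) ⟨g 1, ⟨1, le_rfl, by omega, rfl⟩, h1 ▸ hal⟩
    ⟨g t, ⟨t, by omega, le_rfl, rfl⟩, q4⟩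
  have hm := hp.2.1
  have hcase : ∀ i ≤ m, i = 0 ∨ i = m ∨ (0 < i ∧ i < m) := by intro i hi; omega
  have hda : d ≠ a := fun e => h.dl (e ▸ h.a)
  have hdb : d ≠ b := fun e => h.dr (e ▸ h.b)
  have hdr : G.Adj d r' := (h.d.2.2 _ h.d.2.1).2 rfl
  have hdadj : ∀ i ≤ m, ¬ G.Adj d (p i) := by
    intro i hi e
    rcases hcase i hi with rfl | rfl | ⟨h5, h6⟩
    · exact h.S.ind _ h.d.1 _ h.a.1 (hp0 ▸ e)
    · exact h.S.ind _ h.d.1 _ h.b.1 (hpm ▸ e)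
    · obtain ⟨k, e1, e2, e3⟩ := hp.2.2.1 i h5 h6
      rw [e3] at e
      have := (h.d.2.2 _ (hgin k (by omega) (by omega))).1 e
      rw [← h2] at this
      have := hg.1 _ (by omega) _ (by omega) this
      omega
  have hradj : ∀ i ≤ m, G.Adj r' (p i) → i = m := by
    intro i hi e
    rcases hcase i hi with rfl | rfl | ⟨h5, h6⟩
    · exact absurd (hp0 ▸ e.symm) har
    · rfl
    · obtain ⟨k, e1, e2, e3⟩ := hp.2.2.1 i h5 h6
      rw [e3, ← h2] at e
      have := (hg.2 _ (by omega) _ (by omega)).1 e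
      omega
  have hc := core hp.1 (X := B) (fun i h5 h6 => by
      obtain ⟨k, e1, e2, e3⟩ := hp.2.2.1 i h5 h6
      rw [e3]; exact hgin k (by omega) (by omega))
    (conn_insert (conn_singleton G r') rfl hdr) (z := d) (q := r') (Or.inl rfl) (Or.inr rfl)
    (by
      rintro w (rfl | rfl)
      · exact Or.inr rfl
      · exact Or.inl h.d.2.1)
    (by
      rintro w (rfl | rfl) i hi e
      · rcases hcase i hi with rfl | rfl | ⟨h5, h6⟩
        · exact hda (e.trans hp0)
        · exact hdb (e.trans hpm)
        · obtain ⟨k, e1, e2, e3⟩ := hp.2.2.1 i h5 h6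
          exact h.S.dBC _ (hgin k (by omega) (by omega)) ((e.trans e3) ▸ h.d.1)
      · rcases hcase i hi with rfl | rfl | ⟨h5, h6⟩
        · exact h.S.dBC _ h.d.2.1 (e.trans hp0 ▸ h.a.1)
        · exact h.S.dBC _ h.d.2.1 (e.trans hpm ▸ h.b.1)
        · obtain ⟨k, e1, e2, e3⟩ := hp.2.2.1 i h5 h6
          rw [e3, ← h2] at e
          have := hg.1 _ (by omega) _ (by omega) e
          omega)
    ⟨m, le_rfl, by rw [hpm]; exact hbr.symm⟩
    (by
      rintro w (rfl | rfl) hw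
      · exact hdadj
      · exact absurd rfl hw)
  obtain ⟨hz1, -⟩ := lemmaZ h.S h.PA h.a h.b h.d.1 h.dl h.dr
  rw [CoreOut, hp0, hpm] at hc
  rcases hc with ⟨-, i, j, h5, h6, h7, h8⟩ | ⟨i, L, h5, h6, h7, -, hL⟩ | ⟨i, L, h5, h6, h7, hL⟩
  · have := hradj i (by omega) h7
    omega
  · have := hradj i (by omega) h6
    omega
  · have := hradj i h5 h6
    subst this
    rw [hpm] at hL
    rcases hz1 _ _ hL with e | ⟨e, -⟩
    · exact hdb e.symm
    · exact h.S.ind _ h.b.1 _ h.d.1 e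

lemma Cfg.false (h : Cfg G A B C l r l' r' a b c d) : False := by
  rcases h.stepi.1 with h' | h'
  · exact h.stepiii h'
  · exact h.swapA.stepiii h'

end cfg

/-- Combination of all cases. -/
lemma combine {G : SimpleGraph V} {A B C : Set V} (S : Setup G A B C) {l r l' r' : V}
    (hA : PE G C A l r) (hB : PE G C B l' r') (hl : ∃ a, Priv G C A a l)
    (hr : ∃ a, Priv G C A a r) (hl' : ∃ a, Priv G C B a l') (hr' : ∃ a, Priv G C B a r') :
    ((∃ x, Priv G C A x l ∧ Priv G C B x l') ∧ (∃ y, Priv G C A y r ∧ Priv G C B y r')) ∨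
    ((∃ x, Priv G C A x l ∧ Priv G C B x r') ∧ (∃ y, Priv G C A y r ∧ Priv G C B y l')) := by
  have F1 : ∀ l r l' r', PE G C A l r → PE G C B l' r' →
      (∃ x, Priv G C A x l ∧ Priv G C B x l') →
      (∃ x, Priv G C A x r ∧ ¬ Priv G C B x l' ∧ ¬ Priv G C B x r') →
      (∃ x, Priv G C B x r' ∧ ¬ Priv G C A x l ∧ ¬ Priv G C A x r) → False := by
    rintro l r l' r' hA hB ⟨x, x1, x2⟩ ⟨y, y1, y2, y3⟩ ⟨z, z1, z2, z3⟩
    exact fact1 S hA hB x1 x2 y1 z1 z2 z3 y2 y3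
  have F2 : ∀ l r l' r', PE G C A l r → PE G C B l' r' →
      (∃ x, Priv G C A x l ∧ Priv G C B x l') → (∃ x, Priv G C A x l ∧ Priv G C B x r') →
      (∃ x, Priv G C A x r ∧ ¬ Priv G C B x l' ∧ ¬ Priv G C B x r') → False := by
    rintro l r l' r' hA hB ⟨x, x1, x2⟩ ⟨y, y1, y2⟩ ⟨z, z1, z2, z3⟩
    exact fact2 S hA hB x1 x2 y1 y2 z1 z2 z3
  have F3 : ∀ l r l' r', PE G C A l r → PE G C B l' r' →
      (∃ x, Priv G C A x l ∧ Priv G C B x l') → (∃ x, Priv G C A x r ∧ Priv G C B x l') →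
      (∃ x, Priv G C B x r' ∧ ¬ Priv G C A x l ∧ ¬ Priv G C A x r) → False := by
    rintro l r l' r' hA hB ⟨x, x1, x2⟩ ⟨y, y1, y2⟩ ⟨z, z1, z2, z3⟩
    exact fact2 S.symm hB hA x2 x1 y2 y1 z1 z2 z3
  have F4 : (∃ x, Priv G C A x l ∧ ¬ Priv G C B x l' ∧ ¬ Priv G C B x r') →
      (∃ x, Priv G C A x r ∧ ¬ Priv G C B x l' ∧ ¬ Priv G C B x r') →
      (∃ x, Priv G C B x l' ∧ ¬ Priv G C A x l ∧ ¬ Priv G C A x r) →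
      (∃ x, Priv G C B x r' ∧ ¬ Priv G C A x l ∧ ¬ Priv G C A x r) → False := by
    rintro ⟨x, x1, x2, x3⟩ ⟨y, y1, y2, y3⟩ ⟨z, z1, z2, z3⟩ ⟨w, w1, w2, w3⟩
    exact Cfg.false ⟨S, hA, hB, x1, y1, z1, w1, x2, x3, y2, y3, z2, z3, w2, w3⟩
  have E1 : ∀ l, (∃ x, Priv G C A x l) → (∃ x, Priv G C A x l ∧ Priv G C B x l') ∨
      (∃ x, Priv G C A x l ∧ Priv G C B x r') ∨
      (∃ x, Priv G C A x l ∧ ¬ Priv G C B x l' ∧ ¬ Priv G C B x r') := by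
    rintro l ⟨x, hx⟩
    by_cases h1 : Priv G C B x l'
    · exact Or.inl ⟨x, hx, h1⟩
    · by_cases h2 : Priv G C B x r'
      · exact Or.inr (Or.inl ⟨x, hx, h2⟩)
      · exact Or.inr (Or.inr ⟨x, hx, h1, h2⟩)
  have E2 : ∀ l', (∃ x, Priv G C B x l') → (∃ x, Priv G C A x l ∧ Priv G C B x l') ∨
      (∃ x, Priv G C A x r ∧ Priv G C B x l') ∨
      (∃ x, Priv G C B x l' ∧ ¬ Priv G C A x l ∧ ¬ Priv G C A x r) := by
    rintro l' ⟨x, hx⟩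
    by_cases h1 : Priv G C A x l
    · exact Or.inl ⟨x, h1, hx⟩
    · by_cases h2 : Priv G C A x r
      · exact Or.inr (Or.inl ⟨x, h2, hx⟩)
      · exact Or.inr (Or.inr ⟨x, hx, h1, h2⟩)
  have a1 := F1 l r l' r' hA hB
  have a2 := F1 r l l' r' hA.symm hB
  have a3 := F1 l r r' l' hA hB.symm
  have a4 := F1 r l r' l' hA.symm hB.symm
  have b1 := F2 l r l' r' hA hB
  have b2 := F2 r l l' r' hA.symm hB
  have c1 := F3 l r l' r' hA hB
  have c2 := F3 l r r' l' hA hB.symm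
  have d1 := E1 l hl
  have d2 := E1 r hr
  have d3 := E2 l' hl'
  have d4 := E2 r' hr'
  clear F1 F2 F3 E1 E2 hl hr hl' hr' hA hB S
  have sA : ∀ x y z : V, (¬ Priv G C B x y ∧ ¬ Priv G C B x z) ↔
    (¬ Priv G C B x z ∧ ¬ Priv G C B x y) := fun _ _ _ => and_comm
  have sB : ∀ x y z : V, (¬ Priv G C A x y ∧ ¬ Priv G C A x z) ↔
    (¬ Priv G C A x z ∧ ¬ Priv G C A x y) := fun _ _ _ => and_comm
  simp only [sA _ r' l', sB _ r l] at *
  generalize (∃ x, Priv G C A x l ∧ Priv G C B x l') = p1 at *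
  generalize (∃ x, Priv G C A x l ∧ Priv G C B x r') = p2 at *
  generalize (∃ x, Priv G C A x r ∧ Priv G C B x l') = p3 at *
  generalize (∃ x, Priv G C A x r ∧ Priv G C B x r') = p4 at *
  generalize (∃ x, Priv G C A x l ∧ ¬ Priv G C B x l' ∧ ¬ Priv G C B x r') = p5 at *
  generalize (∃ x, Priv G C A x r ∧ ¬ Priv G C B x l' ∧ ¬ Priv G C B x r') = p6 at *
  generalize (∃ x, Priv G C B x l' ∧ ¬ Priv G C A x l ∧ ¬ Priv G C A x r) = p7 at *
  generalize (∃ x, Priv G C B x r' ∧ ¬ Priv G C A x l ∧ ¬ Priv G C A x r) = p8 at *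
  grind

/-- `X` is the interior of an induced path from `x` to `y`. -/
def Good (G : SimpleGraph V) (X : Set V) (x y : V) : Prop :=
  ∃ n p, IP G n p ∧ 2 ≤ n ∧ p 0 = x ∧ p n = y ∧ ∀ v, v ∈ X ↔ ∃ i, 0 < i ∧ i < n ∧ v = p i

/-- Replace the ends of a path. -/
lemma good_replace {G : SimpleGraph V} {C X : Set V} {n : ℕ} {p : ℕ → V} (hp : IP G n p)
    (hn : 2 ≤ n) (hX : ∀ v, v ∈ X ↔ ∃ i, 0 < i ∧ i < n ∧ v = p i)
    (hd : ∀ v ∈ X, v ∉ C) (hi : ∀ x ∈ C, ∀ y ∈ C, ¬ G.Adj x y) {a b : V} (hab : a ≠ b)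
    (ha : Priv G C X a (p 1)) (hb : Priv G C X b (p (n - 1))) :
    ∃ q : ℕ → V, IP G n q ∧ q 0 = a ∧ q n = b ∧ (∀ i, 0 < i → i < n → q i = p i) ∧
      ∀ v, v ∈ X ↔ ∃ i, 0 < i ∧ i < n ∧ v = q i := by
  let q : ℕ → V := fun i => if i = 0 then a else if i = n then b else p i
  have q0 : q 0 = a := by simp [q]
  have qn : q n = b := by
    have : n ≠ 0 := by omega
    simp [q, this]
  have qi : ∀ i, 0 < i → i < n → q i = p i := by
    intro i h1 h2
    have h3 : i ≠ 0 := by omega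
    have h4 : i ≠ n := by omega
    simp [q, h3, h4]
  have mem : ∀ i, 0 < i → i < n → p i ∈ X := fun i h1 h2 => (hX _).2 ⟨i, h1, h2, rfl⟩
  have trich : ∀ i ≤ n, i = 0 ∨ i = n ∨ (0 < i ∧ i < n) := by intro i hi; omega
  have ane : ∀ i, 0 < i → i < n → a ≠ p i := fun i h1 h2 h => hd _ (mem i h1 h2) (h ▸ ha.1)
  have bne : ∀ i, 0 < i → i < n → b ≠ p i := fun i h1 h2 h => hd _ (mem i h1 h2) (h ▸ hb.1)
  have aadj : ∀ i, 0 < i → i < n → (G.Adj a (p i) ↔ i = 1) := by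
    intro i h1 h2
    rw [ha.2.2 _ (mem i h1 h2)]
    exact ⟨fun h => hp.1 i (by omega) 1 (by omega) h, fun h => by rw [h]⟩
  have badj : ∀ i, 0 < i → i < n → (G.Adj b (p i) ↔ i = n - 1) := by
    intro i h1 h2
    rw [hb.2.2 _ (mem i h1 h2)]
    exact ⟨fun h => hp.1 i (by omega) (n-1) (by omega) h, fun h => by rw [h]⟩
  refine ⟨q, ⟨?_, ?_⟩, q0, qn, qi, ?_⟩
  · intro i hi' j hj h
    rcases trich i hi' with rfl | rfl | ⟨h1, h2⟩ <;> rcases trich j hj with rfl | rfl | ⟨h3, h4⟩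
    · rfl
    · rw [q0, qn] at h; exact absurd h hab
    · rw [q0, qi j h3 h4] at h; exact absurd h (ane j h3 h4)
    · rw [q0, qn] at h; exact absurd h.symm hab
    · rfl
    · rw [qn, qi j h3 h4] at h; exact absurd h (bne j h3 h4)
    · rw [q0, qi i h1 h2] at h; exact absurd h.symm (ane i h1 h2)
    · rw [qn, qi i h1 h2] at h; exact absurd h.symm (bne i h1 h2)
    · rw [qi i h1 h2, qi j h3 h4] at h; exact hp.1 i hi' j hj h
  · intro i hi' j hj
    rcases trich i hi' with rfl | rfl | ⟨h1, h2⟩ <;> rcases trich j hj with rfl | rfl | ⟨h3, h4⟩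
    · simp
    · rw [q0, qn]
      exact ⟨fun h => absurd h (hi _ ha.1 _ hb.1), fun h => by omega⟩
    · rw [q0, qi j h3 h4, aadj j h3 h4]; omega
    · rw [q0, qn]
      exact ⟨fun h => absurd h (hi _ hb.1 _ ha.1), fun h => by omega⟩
    · simp
    · rw [qn, qi j h3 h4, badj j h3 h4]; omega
    · rw [q0, qi i h1 h2, G.adj_comm, aadj i h1 h2]; omega
    · rw [qn, qi i h1 h2, G.adj_comm, badj i h1 h2]; omega
    · rw [qi i h1 h2, qi j h3 h4]; exact hp.2 i hi' j hj
  · intro v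
    rw [hX]
    exact ⟨fun ⟨i, h1, h2, h3⟩ => ⟨i, h1, h2, by rw [qi i h1 h2, h3]⟩,
      fun ⟨i, h1, h2, h3⟩ => ⟨i, h1, h2, by rw [← qi i h1 h2, h3]⟩⟩

/-- Either any two vertices of `C` are good, or the path has distinct ends. -/
lemma good_or_pe {G : SimpleGraph V} {C X : Set V} {n : ℕ} {p : ℕ → V} (hp : IP G n p)
    (hn : 2 ≤ n) (h0 : p 0 ∈ C) (hN : p n ∈ C)
    (hX : ∀ v, v ∈ X ↔ ∃ i, 0 < i ∧ i < n ∧ v = p i)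
    (hd : ∀ v ∈ X, v ∉ C) (hi : ∀ x ∈ C, ∀ y ∈ C, ¬ G.Adj x y)
    (hdom : ∀ c ∈ C, ∃ a ∈ X, G.Adj c a) :
    (∀ x ∈ C, ∀ y ∈ C, x ≠ y → Good G X x y) ∨
    ∃ l r, PE G C X l r ∧ (∃ a, Priv G C X a l) ∧ (∃ a, Priv G C X a r) := by
  by_cases h2 : n = 2
  · left
    subst h2
    have hX1 : ∀ v ∈ X, v = p 1 := by
      intro v hv
      obtain ⟨i, h1, h2, rfl⟩ := (hX v).1 hv
      obtain rfl : i = 1 := by omega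
      rfl
    have h1X : p 1 ∈ X := (hX _).2 ⟨1, by omega, by omega, rfl⟩
    have hpr : ∀ c ∈ C, Priv G C X c (p 1) := by
      intro c hc
      refine ⟨hc, h1X, fun b hb => ⟨fun _ => hX1 b hb, ?_⟩⟩
      rintro rfl
      obtain ⟨a, ha, h⟩ := hdom c hc
      rwa [hX1 a ha] at h
    intro x hx y hy hxy
    obtain ⟨q, h1, h2, h3, -, h4⟩ := good_replace hp hn hX hd hi hxy (hpr x hx) (hpr y hy)
    exact ⟨2, q, h1, le_refl _, h2, h3, h4⟩
  · right
    have hn3 : 3 ≤ n := by omega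
    have hlr : p 1 ≠ p (n - 1) := fun h => by
      have := hp.1 1 (by omega) (n-1) (by omega) h
      omega
    refine ⟨p 1, p (n-1), ⟨hlr, ?_⟩, ⟨p 0, h0, (hX _).2 ⟨1, by omega, by omega, rfl⟩, ?_⟩,
      ⟨p n, hN, (hX _).2 ⟨n-1, by omega, by omega, rfl⟩, ?_⟩⟩
    · intro a b ha hb
      have hab : a ≠ b := by
        rintro rfl
        exact hlr ((hb.2.2 _ ha.2.1).1 ((ha.2.2 _ ha.2.1).2 rfl))
      obtain ⟨q, h1, h2, h3, h5, h4⟩ := good_replace hp hn hX hd hi hab ha hb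
      exact ⟨n, q, h1, hn3, h2, h5 1 (by omega) (by omega), h5 (n-1) (by omega) (by omega), h3, h4⟩
    · intro b hb
      obtain ⟨i, h1, h2, rfl⟩ := (hX b).1 hb
      rw [hp.2 0 (by omega) i (by omega)]
      constructor
      · intro h
        obtain rfl : i = 1 := by omega
        rfl
      · intro h
        have := hp.1 i (by omega) 1 (by omega) h
        omega
    · intro b hb
      obtain ⟨i, h1, h2, rfl⟩ := (hX b).1 hb
      rw [hp.2 n (by omega) i (by omega)]
      constructor
      · intro h
        obtain rfl : i = n - 1 := by omega
        rfl
      · intro h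
        have := hp.1 i (by omega) (n-1) (by omega) h
        omega

lemma PE.good {G : SimpleGraph V} {C X : Set V} {l r x y : V} (h : PE G C X l r)
    (hx : Priv G C X x l) (hy : Priv G C X y r) : Good G X x y := by
  obtain ⟨n, p, h1, h2, h3, -, -, h4, h5⟩ := h.2 x y hx hy
  exact ⟨n, p, h1, by omega, h3, h4, h5⟩

lemma PE.ne {G : SimpleGraph V} {C X : Set V} {l r x y : V} (h : PE G C X l r)
    (hx : Priv G C X x l) (hy : Priv G C X y r) : x ≠ y := by
  rintro rfl
  exact h.1 ((hy.2.2 _ hx.2.1).1 ((hx.2.2 _ hx.2.1).2 rfl))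

lemma exists_good {G : SimpleGraph V} {A B C : Set V} (S : Setup G A B C)
    (hmA : MinDom G C A) (hmB : MinDom G C B) (hC : ∃ x ∈ C, ∃ y ∈ C, x ≠ y) :
    ∃ x ∈ C, ∃ y ∈ C, x ≠ y ∧ Good G A x y ∧ Good G B x y := by
  obtain ⟨n, p, hp, hn, hp0, hpn, hpB⟩ := structure_path S hmB hC
  obtain ⟨m, q, hq, hm, hq0, hqm, hqA⟩ := structure_path S.symm hmA hC
  rcases good_or_pe hq hm hq0 hqm hqA S.dAC S.ind S.domA with h | ⟨l, r, h, hl, hr⟩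
  · have hne : p 0 ≠ p n := fun h => by
      have := hp.1 0 (by omega) n (by omega) h
      omega
    exact ⟨p 0, hp0, p n, hpn, hne, h _ hp0 _ hpn hne, n, p, hp, hn, rfl, rfl, hpB⟩
  rcases good_or_pe hp hn hp0 hpn hpB S.dBC S.ind S.domB with h' | ⟨l', r', h', hl', hr'⟩
  · have hne : q 0 ≠ q m := fun h => by
      have := hq.1 0 (by omega) m (by omega) h
      omega
    exact ⟨q 0, hq0, q m, hqm, hne, ⟨m, q, hq, hm, rfl, rfl, hqA⟩, h' _ hq0 _ hqm hne⟩
  rcases combine S h h' hl hr hl' hr' with ⟨⟨x, hx, hx'⟩, ⟨y, hy, hy'⟩⟩ | ⟨⟨x, hx, hx'⟩, ⟨y, hy, hy'⟩⟩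
  · exact ⟨x, hx.1, y, hy.1, h.ne hx hy, h.good hx hy, h'.good hx' hy'⟩
  · exact ⟨x, hx.1, y, hy.1, h.ne hx hy, h.good hx hy, h'.symm.good hx' hy'⟩

/-- Two paths glue to a hole. -/
lemma hole_of_paths {G : SimpleGraph V} {A B C : Set V} (S : Setup G A B C) {x y : V} {m n : ℕ}
    {f g : ℕ → V} (hf : IP G m f) (hg : IP G n g) (hm : 2 ≤ m) (hn : 2 ≤ n)
    (f0 : f 0 = x) (fm : f m = y) (g0 : g 0 = x) (gn : g n = y) (hx : x ∈ C) (hy : y ∈ C)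
    (hA : ∀ i, 0 < i → i < m → f i ∈ A) (hB : ∀ i, 0 < i → i < n → g i ∈ B) :
    ∃ h : ZMod (m + n) → V, IsHoleEmb G (m + n) h ∧
      Set.range h = {w | (∃ i ≤ m, w = f i) ∨ (∃ i ≤ n, w = g i)} := by
  have : NeZero (m + n) := ⟨by omega⟩
  let k : ℕ → V := fun i => if i ≤ m then f i else g (m + n - i)
  have kf : ∀ i ≤ m, k i = f i := fun i hi => by simp [k, hi]
  have kg : ∀ i, m ≤ i → i ≤ m + n → (i < m + n) → k i = g (m + n - i) := by
    intro i h1 h2 h3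
    by_cases h : i = m
    · subst h
      rw [kf _ le_rfl, fm]
      rw [show i + n - i = n by omega, gn]
    · have : ¬ i ≤ m := by omega
      simp [k, this]
  -- cross facts
  have cross : ∀ i j, i ≤ m → m < j → j < m + n → f i ≠ g (m + n - j) ∧
      (G.Adj (f i) (g (m + n - j)) ↔ (i + 1 = j ∨ (i = 0 ∧ j + 1 = m + n))) := by
    intro i j hi h1 h2
    have hb := hB (m + n - j) (by omega) (by omega)
    by_cases i0 : i = 0
    · subst i0
      rw [f0]
      refine ⟨fun h => S.dBC _ hb (h ▸ hx), ?_⟩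
      rw [← g0, hg.2 0 (by omega) _ (by omega)]
      omega
    by_cases im : i = m
    · subst im
      rw [fm]
      refine ⟨fun h => S.dBC _ hb (h ▸ hy), ?_⟩
      rw [← gn, hg.2 n (by omega) _ (by omega)]
      omega
    · have ha := hA i (by omega) (by omega)
      refine ⟨fun h => S.dAB _ ha (h ▸ hb), fun h => absurd h (S.anti _ ha _ hb), fun h => by omega⟩
  have kinj : ∀ i j, i < m + n → j < m + n → i ≤ j → k i = k j → i = j := by
    intro i j hi hj hij h
    by_cases h1 : j ≤ m
    · rw [kf i (by omega), kf j h1] at h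
      exact hf.1 _ (by omega) _ h1 h
    by_cases h2 : i ≤ m
    · rw [kf i h2, kg j (by omega) (by omega) hj] at h
      exact absurd h (cross i j h2 (by omega) hj).1
    · rw [kg i (by omega) (by omega) hi, kg j (by omega) (by omega) hj] at h
      have := hg.1 _ (by omega) _ (by omega) h
      omega
  have kadj : ∀ i j, i < m + n → j < m + n → i ≤ j →
      (G.Adj (k i) (k j) ↔ (i + 1 = j ∨ (i = 0 ∧ j + 1 = m + n))) := by
    intro i j hi hj hij
    by_cases h1 : j ≤ m
    · rw [kf i (by omega), kf j h1, hf.2 _ (by omega) _ h1]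
      omega
    by_cases h2 : i ≤ m
    · rw [kf i h2, kg j (by omega) (by omega) hj]
      exact (cross i j h2 (by omega) hj).2
    · rw [kg i (by omega) (by omega) hi, kg j (by omega) (by omega) hj,
        hg.2 _ (by omega) _ (by omega)]
      omega
  have succ : ∀ a b : ZMod (m + n), b = a + 1 ↔
      (a.val + 1 = b.val ∨ (b.val = 0 ∧ a.val + 1 = m + n)) := by
    intro a b
    have ha := ZMod.val_lt a
    have hb := ZMod.val_lt b
    rw [← (ZMod.val_injective (m+n)).eq_iff, ZMod.val_add, ZMod.val_one_eq_one_mod,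
      Nat.mod_eq_of_lt (show 1 < m + n by omega)]
    rcases Nat.lt_or_ge (a.val + 1) (m + n) with h | h
    · rw [Nat.mod_eq_of_lt h]; omega
    · rw [show a.val + 1 = m + n by omega, Nat.mod_self]; omega
  refine ⟨fun z => k z.val, ⟨by omega, ?_, ?_⟩, ?_⟩
  · intro a b h
    apply ZMod.val_injective
    rcases le_total a.val b.val with h1 | h1
    · exact kinj _ _ (ZMod.val_lt a) (ZMod.val_lt b) h1 h
    · exact (kinj _ _ (ZMod.val_lt b) (ZMod.val_lt a) h1 h.symm).symm
  · intro a b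
    rw [succ a b, succ b a]
    have ha := ZMod.val_lt a
    have hb := ZMod.val_lt b
    rcases le_total a.val b.val with h1 | h1
    · rw [kadj _ _ ha hb h1]; omega
    · rw [G.adj_comm, kadj _ _ hb ha h1]; omega
  · ext w
    simp only [Set.mem_range, Set.mem_ofPred_eq]
    constructor
    · rintro ⟨z, rfl⟩
      have hz := ZMod.val_lt z
      by_cases h : z.val ≤ m
      · exact Or.inl ⟨_, h, kf _ h⟩
      · exact Or.inr ⟨_, by omega, kg _ (by omega) (by omega) hz⟩
    · rintro (⟨i, hi, rfl⟩ | ⟨i, hi, rfl⟩)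
      · refine ⟨(i : ZMod (m+n)), ?_⟩
        rw [ZMod.val_natCast, Nat.mod_eq_of_lt (by omega), kf i hi]
      · by_cases h0 : i = 0
        · refine ⟨0, ?_⟩
          rw [ZMod.val_zero, kf 0 (by omega), h0, f0, g0]
        · refine ⟨((m + n - i : ℕ) : ZMod (m+n)), ?_⟩
          rw [ZMod.val_natCast, Nat.mod_eq_of_lt (by omega), kg _ (by omega) (by omega) (by omega)]
          congr 1
          omega

lemma conn_of_induce {G : SimpleGraph V} {A : Set V} (h : (G.induce A).Connected) : Conn G A := by
  intro u hu v hv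
  obtain ⟨w⟩ := h.preconnected ⟨u, hu⟩ ⟨v, hv⟩
  refine ⟨w.map (Embedding.induce A).toHom, ?_⟩
  intro z hz
  have hz' := (List.mem_map.1 ((Walk.support_map (Embedding.induce A).toHom w) ▸ hz :
    z ∈ w.support.map (Embedding.induce A).toHom))
  clear hz
  have hz := hz'
  obtain ⟨z', -, rfl⟩ := hz
  exact z'.2

lemma exists_min_dom {G : SimpleGraph V} {A C : Set V} (hn : A.Nonempty) (hc : Conn G A)
    (hd : ∀ c ∈ C, ∃ a ∈ A, G.Adj c a) :
    ∃ T ⊆ A, Conn G T ∧ (∀ c ∈ C, ∃ a ∈ T, G.Adj c a) ∧ MinDom G C T := by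
  obtain ⟨T, hT, hmin⟩ := Set.Finite.exists_le_minimal
    (Set.toFinite {T : Set V | T.Nonempty ∧ Conn G T ∧ ∀ c ∈ C, ∃ a ∈ T, G.Adj c a})
    (show A ∈ _ from ⟨hn, hc, hd⟩)
  refine ⟨T, hT, hmin.1.2.1, hmin.1.2.2, ?_⟩
  intro T' h1 h2 h3 h4
  exact Set.Subset.antisymm h1 (hmin.2 ⟨h2, h3, h4⟩ h1)

lemma comp_disjoint {G : SimpleGraph V} {A B C : Set V} (hA : IsFullComponent G C A)
    (hB : IsFullComponent G C B) {v : V} (hvA : v ∈ A) (hvB : v ∈ B) : A ⊆ B := by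
  intro u hu
  obtain ⟨w, hw⟩ := conn_of_induce hA.2.2.1 v hvA u hu
  clear hu hvA
  induction w with
  | nil => exact hvB
  | cons h p ih =>
    refine ih ?_ (fun w hw' => hw w (by simp [hw']))
    rcases hB.2.2.2.1 _ hvB _ h with h' | h'
    · exact h'
    · exact absurd h' (Set.disjoint_left.1 hA.2.1 (hw _ (by simp)))
/-- Let `G ∈ 𝒞`, let `C` be a minimal separator of size at least 2 that is
an independent set and let `A, B` be distinct components of `G ∖ C` full to `C`. Then there
are `x, y ∈ C` and chordless paths `P_A` from `x` to `y` with interior in `A` and `P_B` from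
`x` to `y` with interior in `B` such that every vertex of `C ∖ {x,y}` has neighbors in the
interiors of both, and `V(P_A) ∪ V(P_B)` induces a hole. -/
theorem statement9 (G : SimpleGraph V) (hG : InClassC G)
    (C : Set V) (hmin : MinSeparator G C) (hcard : 2 ≤ C.ncard)
    (hind : ∀ x ∈ C, ∀ y ∈ C, ¬G.Adj x y)
    (A B : Set V) (hA : IsFullComponent G C A) (hB : IsFullComponent G C B) (hAB : A ≠ B) :
    ∃ x ∈ C, ∃ y ∈ C, x ≠ y ∧ ∃ (pA pB : G.Walk x y),
      IsInducedPathW G pA ∧ IsInducedPathW G pB ∧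
      (∀ w ∈ pA.support, w ≠ x → w ≠ y → w ∈ A) ∧
      (∀ w ∈ pB.support, w ≠ x → w ≠ y → w ∈ B) ∧
      (∀ c ∈ C, c ≠ x → c ≠ y →
        (∃ w ∈ pA.support, w ≠ x ∧ w ≠ y ∧ G.Adj c w) ∧
        (∃ w ∈ pB.support, w ≠ x ∧ w ≠ y ∧ G.Adj c w)) ∧
      (∃ (m : ℕ) (g : ZMod m → V), IsHoleEmb G m g ∧
        Set.range g = {w : V | w ∈ pA.support ∨ w ∈ pB.support}) := by
  have dAB : ∀ a ∈ A, a ∉ B := fun v h1 h2 =>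
    hAB (Set.Subset.antisymm (comp_disjoint hA hB h1 h2) (comp_disjoint hB hA h2 h1))
  have anti : ∀ a ∈ A, ∀ b ∈ B, ¬ G.Adj a b := by
    intro a ha b hb h
    rcases hA.2.2.2.1 a ha b h with h' | h'
    · exact dAB b h' hb
    · exact Set.disjoint_left.1 hB.2.1 hb h'
  obtain ⟨A0, sA, cA, domA, mA⟩ := exists_min_dom hA.1 (conn_of_induce hA.2.2.1) hA.2.2.2.2
  obtain ⟨B0, sB, cB, domB, mB⟩ := exists_min_dom hB.1 (conn_of_induce hB.2.2.1) hB.2.2.2.2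
  have S : Setup G A0 B0 C :=
    { dAB := fun a ha hb => dAB a (sA ha) (sB hb)
      dAC := fun a ha => Set.disjoint_left.1 hA.2.1 (sA ha)
      dBC := fun a ha => Set.disjoint_left.1 hB.2.1 (sB ha)
      anti := fun a ha b hb => anti a (sA ha) b (sB hb)
      ind := hind
      nth := hG.1
      npr := hG.2.1
      npy := hG.2.2.1
      domA := domA
      domB := domB
      cA := cA
      cB := cB }
  have hC : ∃ x ∈ C, ∃ y ∈ C, x ≠ y := by
    obtain ⟨x, y, hx, hy, h⟩ := (Set.one_lt_ncard_iff (Set.toFinite C)).1 hcard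
    exact ⟨x, hx, y, hy, h⟩
  obtain ⟨x, hx, y, hy, hxy, ⟨m, f, hf, hm, f0, fm, fA⟩, ⟨n, g, hg, hn, g0, gn, gB⟩⟩ :=
    exists_good S mA mB hC
  obtain ⟨pA, iA, -, uA⟩ := induced_of_ip hf f0 fm
  obtain ⟨pB, iB, -, uB⟩ := induced_of_ip hg g0 gn
  obtain ⟨h, hh, hr⟩ := hole_of_paths S hf hg hm hn f0 fm g0 gn hx hy
    (fun i h1 h2 => (fA _).2 ⟨i, h1, h2, rfl⟩) (fun i h1 h2 => (gB _).2 ⟨i, h1, h2, rfl⟩)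
  refine ⟨x, hx, y, hy, hxy, pA, pB, iA, iB, ?_, ?_, ?_, m + n, h, hh, ?_⟩
  · intro w hw wx wy
    obtain ⟨i, hi, rfl⟩ := (uA w).1 hw
    have h1 : i ≠ 0 := by rintro rfl; exact wx f0
    have h2 : i ≠ m := by rintro rfl; exact wy fm
    exact sA ((fA _).2 ⟨i, by omega, by omega, rfl⟩)
  · intro w hw wx wy
    obtain ⟨i, hi, rfl⟩ := (uB w).1 hw
    have h1 : i ≠ 0 := by rintro rfl; exact wx g0
    have h2 : i ≠ n := by rintro rfl; exact wy gn
    exact sB ((gB _).2 ⟨i, by omega, by omega, rfl⟩)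
  · intro c hc _ _
    constructor
    · obtain ⟨a, ha, hca⟩ := domA c hc
      obtain ⟨i, h1, h2, h3⟩ := (fA a).1 ha
      exact ⟨a, (uA a).2 ⟨i, by omega, h3⟩, fun e => S.dAC a ha (e ▸ hx),
        fun e => S.dAC a ha (e ▸ hy), hca⟩
    · obtain ⟨a, ha, hca⟩ := domB c hc
      obtain ⟨i, h1, h2, h3⟩ := (gB a).1 ha
      exact ⟨a, (uB a).2 ⟨i, by omega, h3⟩, fun e => S.dBC a ha (e ▸ hx),
        fun e => S.dBC a ha (e ▸ hy), hca⟩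
  · rw [hr]
    ext w
    simp only [Set.mem_ofPred_eq, uA, uB]
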